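/- arXiv:0901.0805 — 3 statements merged into one kernel-verified Lean document; each statement's English description precedes it below -/
import Mathlib

section
/- Let $G$ be a finite group, $p$ a prime, and $H$ a strongly $p$-embedded subgroup of $G$ such that $H$ contains an elementary abelian subgroup of order $p^2$ (i.e., $m_p(H) \ge 2$). Then $O_{p'}(G) = \bigcap_{g \in G} H^g$; in particular $O_{p'}(G) \le H$. -/
/-- The conjugate subgroup `g H g⁻¹`. -/
def conjSub {G : Type*} [Group G] (g : G) (H : Subgroup G) : Subgroup G :=
  Subgroup.map (MulAut.conj g).toMonoidHom H

/-- `H` is a strongly `p`-embedded subgroup of `G` : `H < G`, `p` divides `|H|`, and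
`p` does not divide `|H ∩ H^g|` for every `g ∈ G \ H`. -/
def IsStronglyPEmbedded {G : Type*} [Group G] (p : ℕ) (H : Subgroup G) : Prop :=
  H ≠ ⊤ ∧ (p ∣ Nat.card H) ∧ ∀ g : G, g ∉ H → ¬ (p ∣ Nat.card ↥(H ⊓ conjSub g H))

/-- `O_{p'}(G)`, the largest normal `p'`-subgroup of `G`. -/
def pPrimeCore (p : ℕ) (G : Type*) [Group G] : Subgroup G :=
  sSup {N : Subgroup G | N.Normal ∧ ¬ (p ∣ Nat.card N)}

/-- `m_p(H) ≥ 2` : `H` contains an elementary abelian subgroup of order `p ^ 2`. -/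
def HasElemAbelianRankTwo {G : Type*} [Group G] (p : ℕ) (H : Subgroup G) : Prop :=
  ∃ A : Subgroup G, A ≤ H ∧ Nat.card A = p ^ 2 ∧ ∀ a ∈ A, a ^ p = 1

/-!
Let `A ≤ H` be elementary abelian of order `p ^ 2`. If `x` centralizes some `1 ≠ a ∈ A`, then
`a ∈ H ∩ H^x`, so strong embedding forces `x ∈ H`. Hence a normal `p'`-subgroup `N` lies in `H` as
soon as `N = ⟨C_N(a) : 1 ≠ a ∈ A⟩`.

For this generation statement one may replace `N` by its `A`-invariant Sylow subgroups, which exist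
because the `p`-group `A` permutes a set of Sylow subgroups of size prime to `p`. For nilpotent `N`
one inducts along `1 → Z(N) → N → N / Z(N) → 1`: an `a`-invariant coset of `Z(N)` has size prime
to `p`, hence contains a fixed point of `a`. For abelian `N`, choose generators `a, b` of `A`; then
the product over `j < p` of the norms of `x` under `a * b ^ j` equals `x ^ p` times translates of
norms under `b ^ i` with `0 < i < p`, and every norm is a fixed point.

Conversely the core of `H` is contained in `H ∩ H^g` with `g ∉ H`, so it is a `p'`-group.
-/

open MulAction

section FixedPoints

variable {A N : Type*} [Group A] [Group N] [MulDistribMulAction A N]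

variable (A N) in
/-- The subgroup `⟨C_N(a) : a ∈ A, a ≠ 1⟩` of a group `N` on which `A` acts by automorphisms. -/
def fixedByClosure : Subgroup N :=
  Subgroup.closure {x | ∃ a : A, a ≠ 1 ∧ x ∈ fixedBy N a}

theorem mem_fixedByClosure {a : A} (ha : a ≠ 1) {x : N} (hx : a • x = x) :
    x ∈ fixedByClosure A N :=
  Subgroup.subset_closure ⟨a, ha, hx⟩

theorem fixedByClosure_le {D : Subgroup N} :
    fixedByClosure A N ≤ D ↔ ∀ a : A, a ≠ 1 → ∀ x : N, a • x = x → x ∈ D :=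
  (Subgroup.closure_le D).trans
    ⟨fun h a ha _ hx => h ⟨a, ha, hx⟩, fun h x ⟨a, ha, hx⟩ => h a ha x hx⟩

theorem map_fixedByClosure_le {M : Type*} [Group M] [MulDistribMulAction A M] (f : M →* N)
    (hf : ∀ (a : A) (x : M), f (a • x) = a • f x) :
    (fixedByClosure A M).map f ≤ fixedByClosure A N := by
  rw [Subgroup.map_le_iff_le_comap, fixedByClosure_le]
  intro a ha x hx
  exact mem_fixedByClosure ha (by rw [← hf, hx])

/-- The action of `A` on an invariant subgroup. -/
abbrev invariantSubgroupAction (K : Subgroup N) (hK : ∀ a : A, ∀ x ∈ K, a • x ∈ K) :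
    MulDistribMulAction A K where
  smul a x := ⟨a • (x : N), hK a x x.2⟩
  one_smul x := Subtype.ext (one_smul A (x : N))
  mul_smul a b x := Subtype.ext (mul_smul a b (x : N))
  smul_mul a x y := Subtype.ext (smul_mul' a (x : N) y)
  smul_one a := Subtype.ext (smul_one a)

theorem le_fixedByClosure_of_invariant (K : Subgroup N) (hK : ∀ a : A, ∀ x ∈ K, a • x ∈ K)
    (h : let _ := invariantSubgroupAction K hK; fixedByClosure A K = ⊤) :
    K ≤ fixedByClosure A N := by
  let _ := invariantSubgroupAction K hK
  calc K = (fixedByClosure A K).map K.subtype := by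
        rw [h, ← MonoidHom.range_eq_map, Subgroup.range_subtype]
    _ ≤ fixedByClosure A N := map_fixedByClosure_le K.subtype fun _ _ => rfl

/-- The action of `A` on the quotient by an invariant normal subgroup. -/
abbrev invariantQuotientAction (K : Subgroup N) [K.Normal] (hK : ∀ a : A, ∀ x ∈ K, a • x ∈ K) :
    MulDistribMulAction A (N ⧸ K) where
  smul a := QuotientGroup.map K K (MulDistribMulAction.toMonoidHom N a) (hK a)
  one_smul := by
    rintro ⟨x⟩
    exact congrArg QuotientGroup.mk (one_smul A x)
  mul_smul := by
    rintro a b ⟨x⟩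
    exact congrArg QuotientGroup.mk (mul_smul a b x)
  smul_mul a := map_mul (QuotientGroup.map K K (MulDistribMulAction.toMonoidHom N a) (hK a))
  smul_one a := map_one (QuotientGroup.map K K (MulDistribMulAction.toMonoidHom N a) (hK a))

theorem smul_mem_of_characteristic (K : Subgroup N) [K.Characteristic] (a : A) {x : N}
    (hx : x ∈ K) : a • x ∈ K :=
  (Subgroup.characteristic_iff_map_eq.1 ‹_› (MulDistribMulAction.toMulEquiv N a)).le
    (Subgroup.mem_map_of_mem _ hx)

end FixedPoints

section CoprimeAction

variable {p : ℕ} [Fact p.Prime]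

section FixedPointLifting

variable {B : Type*} [Group B]

theorem exists_mem_fixedPoints_of_not_dvd_card {X : Type*} [MulAction B X] (hB : IsPGroup p B)
    (s : Set X) (hs : ∀ b : B, ∀ x ∈ s, b • x ∈ s) (hcard : ¬ p ∣ Nat.card s) :
    ∃ x ∈ s, x ∈ fixedPoints B X := by
  let S : SubMulAction B X := ⟨s, fun b x hx => hs b x hx⟩
  obtain ⟨x, hx⟩ := hB.nonempty_fixed_point_of_prime_not_dvd_card S hcard
  exact ⟨x, x.2, fun b => congrArg Subtype.val (hx b)⟩

theorem exists_mem_fixedPoints_mk_eq {N : Type*} [Group N] [MulAction B N] (hB : IsPGroup p B)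
    (K : Subgroup N) (hK : ¬ p ∣ Nat.card K) [MulAction B (N ⧸ K)]
    (hmk : ∀ (b : B) (x : N), b • (x : N ⧸ K) = ↑(b • x)) {c : N ⧸ K}
    (hc : c ∈ fixedPoints B (N ⧸ K)) : ∃ x ∈ fixedPoints B N, (x : N ⧸ K) = c := by
  obtain ⟨y, rfl⟩ := QuotientGroup.mk_surjective c
  have hcard : Nat.card {x : N | (x : N ⧸ K) = y} = Nat.card K := by
    rw [QuotientGroup.eq_class_eq_leftCoset]
    exact Nat.card_congr (Subgroup.leftCosetEquivSubgroup y)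
  have hinv : ∀ (b : B) (x : N), (x : N ⧸ K) = y → (↑(b • x) : N ⧸ K) = y := by
    intro b x hx
    rw [← hmk, hx, hc b]
  obtain ⟨x, hxy, hx⟩ := exists_mem_fixedPoints_of_not_dvd_card hB {x : N | (x : N ⧸ K) = y} hinv
    (by rwa [hcard])
  exact ⟨x, hx, hxy⟩

end FixedPointLifting

variable {A N : Type*} [Group A] [Group N] [MulDistribMulAction A N]

theorem fixedByClosure_eq_top_of_quotient (hA : IsPGroup p A) (K : Subgroup N) [K.Normal]
    (hK : ∀ a : A, ∀ x ∈ K, a • x ∈ K) (hpK : ¬ p ∣ Nat.card K) (hKD : K ≤ fixedByClosure A N)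
    (h : let _ := invariantQuotientAction K hK; fixedByClosure A (N ⧸ K) = ⊤) :
    fixedByClosure A N = ⊤ := by
  let _ := invariantQuotientAction K hK
  have hmap : (fixedByClosure A N).map (QuotientGroup.mk' K) = ⊤ := by
    rw [eq_top_iff, ← h, fixedByClosure_le]
    intro a ha c hc
    have hstab : Subgroup.zpowers a ≤ stabilizer A c := Subgroup.zpowers_le.2 hc
    obtain ⟨x, hx, rfl⟩ := exists_mem_fixedPoints_mk_eq (hA.to_subgroup (Subgroup.zpowers a)) K hpK
      (fun _ _ => rfl) (fun b => hstab b.2)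
    exact Subgroup.mem_map_of_mem _ (mem_fixedByClosure ha (hx ⟨a, Subgroup.mem_zpowers a⟩))
  have hker : (QuotientGroup.mk' K).ker ≤ fixedByClosure A N := by
    rwa [QuotientGroup.ker_mk']
  rw [← Subgroup.comap_map_eq_self hker, hmap, Subgroup.comap_top]

theorem exists_sylow_smul_eq (hA : IsPGroup p A) (hN : ¬ p ∣ Nat.card N) (q : ℕ) [Fact q.Prime] :
    ∃ P : Sylow q N, ∀ a : A, a • P = P := by
  have : Finite N := Nat.finite_of_card_ne_zero fun h => hN (h ▸ dvd_zero p)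
  refine hA.nonempty_fixed_point_of_prime_not_dvd_card (Sylow q N) fun h => hN ?_
  exact h.trans ((default : Sylow q N).card_dvd_index.trans (Subgroup.index_dvd_card _))

end CoprimeAction

section Norm

variable {A N : Type*} [Monoid A] [CommGroup N] [MulDistribMulAction A N]

/-- The product `x · (a • x) ⋯ (a ^ (n - 1) • x)`: the norm of `x` under the cyclic group generated
by an element `a` with `a ^ n = 1`. -/
def cyclicNorm (n : ℕ) (a : A) (x : N) : N :=
  ∏ i ∈ Finset.range n, a ^ i • x

theorem smul_cyclicNorm {n : ℕ} {a : A} (ha : a ^ n = 1) (x : N) :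
    a • cyclicNorm n a x = cyclicNorm n a x := by
  have hshift := (Finset.prod_range_succ' (fun i => a ^ i • x) n).symm.trans
    (Finset.prod_range_succ (fun i => a ^ i • x) n)
  rw [pow_zero, ha] at hshift
  simpa only [cyclicNorm, Finset.smul_prod', smul_smul, ← pow_succ'] using mul_right_cancel hshift

theorem prod_cyclicNorm_mul_pow {a b : A} (hab : Commute a b) (n : ℕ) (x : N) :
    ∏ j ∈ Finset.range n, cyclicNorm n (a * b ^ j) x =
      ∏ i ∈ Finset.range n, a ^ i • cyclicNorm n (b ^ i) x := by
  simp only [cyclicNorm]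
  rw [Finset.prod_comm]
  refine Finset.prod_congr rfl fun i _ => ?_
  simp only [Finset.smul_prod', smul_smul, (hab.pow_right _).mul_pow, ← pow_mul, mul_comm i]

end Norm

section ElementaryAbelian

variable {p : ℕ} [Fact p.Prime] {A : Type*} [Group A]

theorem exists_commute_mul_pow_ne_one (hA : Nat.card A = p ^ 2) (hexp : ∀ a : A, a ^ p = 1) :
    ∃ a b : A, Commute a b ∧ b ≠ 1 ∧ ∀ j : ℕ, a * b ^ j ≠ 1 := by
  have hp : 1 < p := (Fact.out : p.Prime).one_lt
  have : Finite A := Nat.finite_of_card_ne_zero (by rw [hA]; positivity)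
  have : Nontrivial A := Finite.one_lt_card_iff_nontrivial.1 (hA ▸ Nat.one_lt_pow two_ne_zero hp)
  obtain ⟨b, hb⟩ := exists_ne (1 : A)
  have hcyc : Subgroup.zpowers b ≠ ⊤ := by
    intro h
    have hcard := Nat.card_zpowers b
    rw [h, Subgroup.card_top, hA, orderOf_eq_prime (hexp b) hb] at hcard
    nlinarith
  obtain ⟨a, -, ha⟩ := SetLike.exists_of_lt hcyc.lt_top
  have := IsPGroup.isMulCommutative_of_card_eq_prime_sq hA
  refine ⟨a, b, mul_comm' a b, hb, fun j hj => ha ?_⟩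
  rw [eq_inv_of_mul_eq_one_left hj]
  exact inv_mem (pow_mem (Subgroup.mem_zpowers b) j)

theorem fixedByClosure_eq_top_of_comm {N : Type*} [CommGroup N] [MulDistribMulAction A N]
    (hA : Nat.card A = p ^ 2) (hexp : ∀ a : A, a ^ p = 1) (hN : ¬ p ∣ Nat.card N) :
    fixedByClosure A N = ⊤ := by
  have hp : p.Prime := Fact.out
  obtain ⟨a, b, hab, hb, hne⟩ := exists_commute_mul_pow_ne_one hA hexp
  refine eq_top_iff.2 fun x _ => ?_
  set D := fixedByClosure A N
  have hnorm : ∏ i ∈ Finset.range p, a ^ i • cyclicNorm p (b ^ i) x ∈ D := by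
    rw [← prod_cyclicNorm_mul_pow hab]
    exact D.prod_mem fun j _ => mem_fixedByClosure (hne j) (smul_cyclicNorm (hexp _) x)
  have hterm : ∀ i ∈ (Finset.range p).erase 0, a ^ i • cyclicNorm p (b ^ i) x ∈ D := by
    intro i hi
    rw [Finset.mem_erase, Finset.mem_range] at hi
    have hbi : b ^ i ≠ 1 :=
      pow_ne_one_of_lt_orderOf hi.1 (hi.2.trans_eq (orderOf_eq_prime (hexp b) hb).symm)
    refine mem_fixedByClosure hbi ?_
    rw [smul_smul, (hab.symm.pow_pow i i).eq, mul_smul, smul_cyclicNorm (hexp _)]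
  -- The factor `i = 0` of the product in `hnorm` is `x ^ p`.
  have hpow : x ^ p ∈ D := by
    rw [← Finset.mul_prod_erase _ _ (Finset.mem_range.2 hp.pos),
      D.mul_mem_cancel_right (D.prod_mem hterm)] at hnorm
    simpa [cyclicNorm] using hnorm
  have hcop : p.Coprime (orderOf x) :=
    (hp.coprime_iff_not_dvd.2 hN).coprime_dvd_right (orderOf_dvd_natCard x)
  exact Subgroup.zpowers_le.2 hpow (mem_zpowers_pow_iff.2 hcop)

theorem fixedByClosure_eq_top_of_isNilpotent {N : Type*} [Group N] [Group.IsNilpotent N]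
    [MulDistribMulAction A N] (hA : Nat.card A = p ^ 2) (hexp : ∀ a : A, a ^ p = 1)
    (hN : ¬ p ∣ Nat.card N) : fixedByClosure A N = ⊤ := by
  revert ‹MulDistribMulAction A N› hN
  refine Group.nilpotent_center_quotient_ind (P := fun N _ _ => ∀ [MulDistribMulAction A N],
    ¬ p ∣ Nat.card N → fixedByClosure A N = ⊤) N ?_ ?_
  · exact fun N _ _ _ _ => Subsingleton.elim _ _
  · intro N _ _ ih _ hN
    have hZ : ∀ a : A, ∀ x ∈ Subgroup.center N, a • x ∈ Subgroup.center N :=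
      fun a _ => smul_mem_of_characteristic _ a
    have hpZ : ¬ p ∣ Nat.card (Subgroup.center N) :=
      fun h => hN (h.trans (Subgroup.card_subgroup_dvd_card _))
    have hpQ : ¬ p ∣ Nat.card (N ⧸ Subgroup.center N) :=
      fun h => hN (h.trans (Subgroup.card_quotient_dvd_card _))
    have hcenter : Subgroup.center N ≤ fixedByClosure A N := by
      open scoped IsMulCommutative in
      let _ := invariantSubgroupAction (Subgroup.center N) hZ
      exact le_fixedByClosure_of_invariant _ hZ (fixedByClosure_eq_top_of_comm hA hexp hpZ)
    let _ := invariantQuotientAction (Subgroup.center N) hZ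
    exact fixedByClosure_eq_top_of_quotient (IsPGroup.of_card hA) _ hZ hpZ hcenter (ih hpQ)

theorem fixedByClosure_eq_top {N : Type*} [Group N] [MulDistribMulAction A N]
    (hA : Nat.card A = p ^ 2) (hexp : ∀ a : A, a ^ p = 1) (hN : ¬ p ∣ Nat.card N) :
    fixedByClosure A N = ⊤ := by
  have : Finite N := Nat.finite_of_card_ne_zero fun h => hN (h ▸ dvd_zero p)
  rw [← Subgroup.index_eq_one]
  by_contra hindex
  obtain ⟨q, hq, hqindex⟩ := Nat.exists_prime_and_dvd hindex
  have : Fact q.Prime := ⟨hq⟩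
  obtain ⟨P, hP⟩ := exists_sylow_smul_eq (IsPGroup.of_card hA) hN q
  have hPinv : ∀ a : A, ∀ x ∈ (P : Subgroup N), a • x ∈ (P : Subgroup N) := by
    intro a x hx
    open scoped Pointwise in
    have hax := Subgroup.smul_mem_pointwise_smul x a (P : Subgroup N) hx
    rwa [← Sylow.pointwise_smul_def, hP] at hax
  have hPnil : Group.IsNilpotent P := P.2.isNilpotent
  have hpP : ¬ p ∣ Nat.card P := fun h => hN (h.trans (Subgroup.card_subgroup_dvd_card _))
  have hPD : (P : Subgroup N) ≤ fixedByClosure A N :=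
    let _ := invariantSubgroupAction _ hPinv
    le_fixedByClosure_of_invariant _ hPinv (fixedByClosure_eq_top_of_isNilpotent hA hexp hpP)
  exact P.not_dvd_index (hqindex.trans (Subgroup.index_dvd_of_le hPD))

end ElementaryAbelian

section StronglyEmbedded

variable {G : Type*} [Group G] {p : ℕ} {H : Subgroup G}

theorem IsStronglyPEmbedded.mem_of_commute (hH : IsStronglyPEmbedded p H) {a x : G} (ha : a ∈ H)
    (hpa : p ∣ orderOf a) (hax : Commute a x) : x ∈ H := by
  by_contra hx
  have ha' : a ∈ conjSub x H := ⟨a, ha, hax.symm.mul_inv_cancel⟩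
  have hmem : a ∈ H ⊓ conjSub x H := ⟨ha, ha'⟩
  rw [← Subgroup.orderOf_mk a hmem] at hpa
  exact hH.2.2 x hx (hpa.trans (orderOf_dvd_natCard _))

theorem IsStronglyPEmbedded.le_of_normal [Fact p.Prime] (hH : IsStronglyPEmbedded p H)
    (hrank : HasElemAbelianRankTwo p H) (N : Subgroup G) [N.Normal] (hN : ¬ p ∣ Nat.card N) :
    N ≤ H := by
  obtain ⟨A, hAH, hA, hexp⟩ := hrank
  let _ : MulDistribMulAction A N :=
    MulDistribMulAction.compHom N ((MulAut.conjNormal (H := N)).comp A.subtype)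
  have hgen : fixedByClosure A N = ⊤ :=
    fixedByClosure_eq_top hA (fun a => Subtype.ext (hexp a a.2)) hN
  rw [← Subgroup.subgroupOf_eq_top, eq_top_iff, ← hgen, fixedByClosure_le]
  intro a ha x hx
  have horder : orderOf (a : G) = p :=
    orderOf_eq_prime (hexp a a.2) (by simpa using ha)
  have hcomm : Commute (a : G) x := mul_inv_eq_iff_eq_mul.1 (congrArg Subtype.val hx)
  exact hH.mem_of_commute (hAH a.2) horder.symm.dvd hcomm

theorem IsStronglyPEmbedded.not_dvd_card_normalCore (hH : IsStronglyPEmbedded p H) :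
    ¬ p ∣ Nat.card H.normalCore := by
  obtain ⟨g, -, hg⟩ := SetLike.exists_of_lt hH.1.lt_top
  have hle : H.normalCore ≤ conjSub g H := by
    rw [Subgroup.normalCore_eq_iInf_map_conj]
    exact iInf_le _ g
  exact fun h => hH.2.2 g hg (h.trans (Subgroup.card_dvd_of_le (le_inf H.normalCore_le hle)))

end StronglyEmbedded

/-- As `Nat.card` is `0` on infinite types, `¬ p ∣ Nat.card K` includes the finiteness of `K`; so
for infinite `G` the groups `H ∩ H^g` with `g ∉ H` are finite, and `pPrimeCore p G` is generated
by the finite normal `p'`-subgroups. -/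
theorem pPrimeCore_eq_core_general {G : Type*} [Group G]
    (p : ℕ) (hp : p.Prime) (H : Subgroup G) (hH : IsStronglyPEmbedded p H)
    (hrank : HasElemAbelianRankTwo p H) :
    pPrimeCore p G = (⨅ g : G, conjSub g H) ∧ pPrimeCore p G ≤ H := by
  have : Fact p.Prime := ⟨hp⟩
  have hcore : pPrimeCore p G = H.normalCore := by
    apply le_antisymm
    · refine sSup_le fun N hN => ?_
      have := hN.1
      exact Subgroup.normal_le_normalCore.2 (hH.le_of_normal hrank N hN.2)
    · exact le_sSup ⟨H.normalCore_normal, hH.not_dvd_card_normalCore⟩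
  exact ⟨hcore.trans H.normalCore_eq_iInf_map_conj, hcore.trans_le H.normalCore_le⟩

theorem pPrimeCore_eq_core {G : Type*} [Group G] [Finite G]
    (p : ℕ) (hp : p.Prime) (H : Subgroup G) (hH : IsStronglyPEmbedded p H)
    (hrank : HasElemAbelianRankTwo p H) :
    pPrimeCore p G = (⨅ g : G, conjSub g H) ∧ pPrimeCore p G ≤ H :=
  pPrimeCore_eq_core_general p hp H hH hrank
end

section
/- Let $k \ge 2$, $A = \mathbb{Z}_{2^k} \times \mathbb{Z}_{2^k}$, and $G = \mathrm{Aut}(A) \cong \mathrm{GL}_2(\mathbb{Z}/2^k\mathbb{Z})$. If $H \le G$ with $H \cong \mathrm{Alt}(4)$, then $O_2(H)$ is the specific subgroup generated by the matrices $\begin{pmatrix} 1+2^{k-1} & 0 \\ 2^{k-1} & 1+2^{k-1} \end{pmatrix}$ and $\begin{pmatrix} 1 & 2^{k-1} \\ 2^{k-1} & 1 \end{pmatrix}$. In particular, $G$ contains exactly one conjugacy class of subgroups isomorphic to $\mathrm{Alt}(4)$. -/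
/-- `O_2(H)`, the largest normal 2-subgroup of `H`. -/
def twoCore (H : Type*) [Group H] : Subgroup H :=
  sSup {N : Subgroup H | N.Normal ∧ IsPGroup 2 ↥N}

/-!
Let `V = O_2(H)`, of order 4 and index 3, and let `t ∈ H` have order 3. For `a ∈ V` we have
`a ^ 2 = t ^ 3 = (a * t) ^ 3 = 1`, so `det a = 1` and `a` is its own adjugate. Hence
`2 * a = a + adj a` is the scalar `tr a`, and being central it satisfies `2 * a = 2` by the
relations between `a` and `t`; that is, `a = 1 + 2 ^ (k - 1) * P`. The relation `(a * t) ^ 3 = 1`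
becomes a linear equation for `P` modulo 2. It has the same four solutions for both elements of
order 3 in `GL_2(𝔽_2)` that `t` can reduce to, and these give the elements of `V`.

Elements of order 3 satisfy `t ^ 2 + t + 1 = 0`, so they are all conjugate to one companion matrix.
As `H` is generated by `V` and `t`, and `V` does not depend on `H`, all such `H` are conjugate.
-/

open Matrix alternatingGroup

section Subgroup

variable {G : Type*} [Group G]

theorem isCoatom_of_prime_index {N : Subgroup G} (hN : N.index.Prime) : IsCoatom N := by
  refine ⟨fun h ↦ hN.ne_one (Subgroup.index_eq_one.2 h), fun L h ↦ ?_⟩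
  have hdvd : L.index ∣ N.index := Subgroup.index_dvd_of_le h.le
  refine Subgroup.index_eq_one.1 ((hN.eq_one_or_self_of_dvd _ hdvd).resolve_right fun heq ↦ ?_)
  have hmul : N.relIndex L * L.index = N.index := Subgroup.relIndex_mul_index h.le
  rw [heq] at hmul
  exact h.not_ge (Subgroup.relIndex_eq_one.1 ((Nat.mul_eq_right hN.ne_zero).1 hmul))

theorem subgroup_eq_closure_pair_of_card_eq_four {V : Subgroup G} {x y : G} (hV : Nat.card V = 4)
    (h : ∀ v ∈ V, v = 1 ∨ v = x ∨ v = y ∨ v = x * y) : V = Subgroup.closure {x, y} := by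
  classical
  have hle : ({1, x, y, x * y} : Set G).ncard ≤ (V : Set G).ncard := by
    rw [← Nat.card_coe_set_eq (V : Set G), SetLike.coe_sort_coe, hV]
    simpa [← Set.ncard_coe_finset] using Finset.card_le_four (a := 1) (b := x) (c := y) (d := x * y)
  have heq : (V : Set G) = {1, x, y, x * y} := Set.eq_of_subset_of_ncard_le h hle
  have hx : x ∈ Subgroup.closure {x, y} := Subgroup.subset_closure (by simp)
  have hy : y ∈ Subgroup.closure {x, y} := Subgroup.subset_closure (by simp)
  refine le_antisymm (fun v hv ↦ ?_) ((Subgroup.closure_le V).2 ?_)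
  · rcases h v hv with rfl | rfl | rfl | rfl
    exacts [one_mem _, hx, hy, mul_mem hx hy]
  · rw [heq]
    simp [Set.insert_subset_iff]

theorem twoCore_eq_coe_sylow (P : Sylow 2 G) [(P : Subgroup G).Normal] : twoCore G = P :=
  le_antisymm (sSup_le fun _ ⟨_, hN⟩ ↦ hN.le_sylow_of_normal P) (le_sSup ⟨‹_›, P.isPGroup'⟩)

end Subgroup

theorem two_mul_eq_two_of_commute {A : Type*} [Ring A] {a t : A} (ha : a ^ 2 = 1) (ht : t ^ 3 = 1)
    (hat : (a * t) ^ 3 = 1) (hcomm : Commute (2 * a) t) : 2 * a = 2 := by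
  have hca : 2 * a * a = 2 := by rw [mul_assoc, ← sq, ha, mul_one]
  symm
  calc (2 : A) = 2 * (a * t) ^ 3 := by rw [hat, mul_one]
    _ = (2 * a * t) * a * t * a * t := by noncomm_ring
    _ = t * (2 * a * a) * t * a * t := by rw [hcomm.eq]; noncomm_ring
    _ = t ^ 2 * (2 * a * t) := by rw [hca]; noncomm_ring
    _ = t ^ 3 * (2 * a) := by rw [hcomm.eq]; noncomm_ring
    _ = 2 * a := by rw [ht, one_mul]

section SquareZero

variable {R A : Type*} [CommRing R] [Ring A] [Algebra R A] {q : R}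

theorem isUnit_one_add_smul (hq : q * q = 0) (x : A) : IsUnit (1 + q • x) :=
  IsNilpotent.isUnit_one_add ⟨2, by rw [sq, smul_mul_smul_comm, hq, zero_smul]⟩

theorem one_add_smul_mul (hq : q * q = 0) (x y : A) :
    (1 + q • x) * (1 + q • y) = 1 + q • (x + y) := by
  rw [mul_add, mul_one, add_mul, one_mul, smul_mul_smul_comm, hq, zero_smul, add_zero, smul_add,
    add_assoc]

theorem smul_sum_conj_eq_zero (hq : q * q = 0) {t x : A} (ht : t ^ 3 = 1)
    (h : ((1 + q • x) * t) ^ 3 = 1) : q • (x + t * x * t ^ 2 + t ^ 2 * x * t) = 0 := by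
  have hsandwich (z : A) : q • x * z * (q • x) = 0 := by
    rw [smul_mul_assoc, smul_mul_smul_comm, hq, zero_smul]
  set y := q • x with hy
  have hexpand : ((1 + y) * t) ^ 3 - t ^ 3 =
      y * t ^ 3 + t * y * t ^ 2 + t ^ 2 * y * t + (y * t * y) * t ^ 2 +
        (y * t ^ 2 * y) * t + t * (y * t * y) * t + (y * t * y) * t * y * t := by
    noncomm_ring
  rw [h, ht, sub_self] at hexpand
  simp only [hsandwich, mul_one, zero_mul, mul_zero, add_zero] at hexpand
  rw [hexpand, hy]
  simp only [smul_add, mul_smul_comm, smul_mul_assoc]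

end SquareZero

theorem eq_one_of_pow_eq_one_of_map_eq_one {A B : Type*} [Ring A] [Ring B] (f : A →+* B)
    [IsLocalHom f] {n : ℕ} (hn : IsUnit (n : B)) {t : A} (ht : t ^ n = 1) (hft : f t = 1) :
    t = 1 := by
  have hunit : IsUnit (∑ i ∈ Finset.range n, t ^ i) := by
    refine isUnit_of_map_unit f _ ?_
    simpa [hft] using hn
  have hzero : (t - 1) * ∑ i ∈ Finset.range n, t ^ i = 0 := by rw [mul_geom_sum, ht, sub_self]
  exact sub_eq_zero.1 (hunit.mul_left_eq_zero.1 hzero)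

theorem isLocalHom_mapMatrix {n R S : Type*} [Fintype n] [DecidableEq n] [CommRing R] [CommRing S]
    (f : R →+* S) [IsLocalHom f] : IsLocalHom (f.mapMatrix : Matrix n n R →+* Matrix n n S) where
  map_nonunit M hM := by
    rw [isUnit_iff_isUnit_det, ← RingHom.map_det] at hM
    exact M.isUnit_iff_isUnit_det.2 (isUnit_of_map_unit f _ hM)

section FinTwo

variable {R : Type*} [CommRing R]

theorem map_fin_two {α β : Type*} (f : α → β) (a b c d : α) :
    !![a, b; c, d].map f = !![f a, f b; f c, f d] :=
  eta_fin_two _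

theorem add_adjugate_fin_two (M : Matrix (Fin 2) (Fin 2) R) : M + M.adjugate = M.trace • 1 := by
  ext i j
  fin_cases i <;> fin_cases j <;> simp [adjugate_fin_two, trace_fin_two, add_comm]

theorem two_mul_eq_two_of_pow_eq_one {a t : Matrix (Fin 2) (Fin 2) R} (ha : a ^ 2 = 1)
    (ht : t ^ 3 = 1) (hat : (a * t) ^ 3 = 1) : 2 * a = 2 := by
  have hdet : a.det = 1 := by
    have h2 : a.det ^ 2 = 1 := by rw [← det_pow, ha, det_one]
    have ht3 : t.det ^ 3 = 1 := by rw [← det_pow, ht, det_one]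
    have h3 : (a.det * t.det) ^ 3 = 1 := by rw [← det_mul, ← det_pow, hat, det_one]
    linear_combination h3 - a.det ^ 3 * ht3 - a.det * h2
  have hadj : a.adjugate = a := by
    calc a.adjugate = a ^ 2 * a.adjugate := by rw [ha, one_mul]
      _ = a := by rw [sq, mul_assoc, mul_adjugate, hdet, one_smul, mul_one]
  have hscalar : 2 * a = a.trace • 1 := by
    rw [← add_adjugate_fin_two, hadj, two_mul]
  exact two_mul_eq_two_of_commute ha ht hat
    (hscalar ▸ (Commute.one_left t).smul_left a.trace)

theorem isConj_companion {t : Matrix (Fin 2) (Fin 2) R} (ht : t ^ 2 + t + 1 = 0)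
    (hunit : IsUnit (t 1 0)) : IsConj !![0, -1; 1, -1] t := by
  have h00 : t 0 0 * t 0 0 + t 0 1 * t 1 0 + t 0 0 + 1 = 0 := by
    simpa [sq, mul_apply, Fin.sum_univ_two] using congr_fun₂ ht 0 0
  have h10 : t 1 0 * t 0 0 + t 1 1 * t 1 0 + t 1 0 = 0 := by
    simpa [sq, mul_apply, Fin.sum_univ_two] using congr_fun₂ ht 1 0
  have hbasis : IsUnit !![1, t 0 0; 0, t 1 0] := by
    simpa [isUnit_iff_isUnit_det] using hunit
  refine ⟨hbasis.unit, ?_⟩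
  have hmul : t * !![1, t 0 0; 0, t 1 0] =
      !![t 0 0, t 0 0 * t 0 0 + t 0 1 * t 1 0; t 1 0, t 1 0 * t 0 0 + t 1 1 * t 1 0] := by
    conv_lhs => rw [eta_fin_two t]
    simp
  rw [SemiconjBy, hbasis.unit_spec, hmul, eq_neg_of_add_eq_zero_left h10,
    show t 0 0 * t 0 0 + t 0 1 * t 1 0 = -1 - t 0 0 by linear_combination h00]
  simp [sub_eq_add_neg]

end FinTwo

theorem zmod_two_eq_of_pow_three_eq_one : ∀ X : Matrix (Fin 2) (Fin 2) (ZMod 2),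
    X ^ 3 = 1 → X ≠ 1 → X = !![0, 1; 1, 1] ∨ X = !![1, 1; 1, 0] := by
  decide +kernel

theorem zmod_two_eq_of_sum_conj_eq_zero {X P : Matrix (Fin 2) (Fin 2) (ZMod 2)} (hX : X ^ 3 = 1)
    (hX1 : X ≠ 1) (h : P + X * P * X ^ 2 + X ^ 2 * P * X = 0) :
    P = 0 ∨ P = !![1, 0; 1, 1] ∨ P = !![0, 1; 1, 0] ∨ P = !![1, 0; 1, 1] + !![0, 1; 1, 0] := by
  rcases zmod_two_eq_of_pow_three_eq_one X hX hX1 with rfl | rfl <;> revert P <;> decide +kernel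

section AltFour

theorem mem_kleinFour_or_pow_three_eq_one (x : alternatingGroup (Fin 4)) :
    x ∈ kleinFour (Fin 4) ∨ x ^ 3 = 1 := by
  have hcycle : ∀ x : alternatingGroup (Fin 4),
      (x : Equiv.Perm (Fin 4)).cycleType = {2, 2} ∨ x ^ 3 = 1 := by decide +kernel
  exact (hcycle x).imp_left fun h ↦ Subgroup.subset_closure h

variable {K : Type*} [Group K]

theorem twoCore_eq_comap_kleinFour (φ : K ≃* alternatingGroup (Fin 4)) :
    twoCore K = (kleinFour (Fin 4)).comap φ.toMonoidHom := by
  obtain ⟨P⟩ : Nonempty (Sylow 2 (alternatingGroup (Fin 4))) := inferInstance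
  have hP : (P : Subgroup (alternatingGroup (Fin 4))) = kleinFour (Fin 4) :=
    two_sylow_eq_kleinFour_of_card_eq_four (Nat.card_fin 4) P
  let Q : Sylow 2 K := P.comapOfInjective φ.toMonoidHom φ.injective (by simp)
  have hQ : (Q : Subgroup K) = (kleinFour (Fin 4)).comap φ.toMonoidHom := by
    rw [← hP]
    rfl
  have : (Q : Subgroup K).Normal :=
    hQ ▸ (normal_kleinFour (Nat.card_fin 4)).comap φ.toMonoidHom
  rw [twoCore_eq_coe_sylow Q, hQ]

theorem card_twoCore (φ : K ≃* alternatingGroup (Fin 4)) :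
    Nat.card (twoCore K) = 4 := by
  rw [twoCore_eq_comap_kleinFour φ]
  exact (Nat.card_congr (φ.toEquiv.subtypeEquiv fun _ ↦ Iff.rfl)).trans
    (kleinFour_card_of_card_eq_four (Nat.card_fin 4))

theorem index_twoCore (φ : K ≃* alternatingGroup (Fin 4)) :
    (twoCore K).index = 3 := by
  have h := (twoCore K).card_mul_index
  rw [card_twoCore φ, Nat.card_congr φ.toEquiv, card_of_card_eq_four (Nat.card_fin 4)] at h
  lia

theorem sq_eq_one_of_mem_twoCore (φ : K ≃* alternatingGroup (Fin 4)) {x : K}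
    (hx : x ∈ twoCore K) : x ^ 2 = 1 := by
  have hφx : φ x ∈ kleinFour (Fin 4) := by rwa [twoCore_eq_comap_kleinFour φ] at hx
  have hexp : (φ x) ^ 2 = 1 := by
    simpa [exponent_kleinFour_of_card_eq_four] using
      congrArg Subtype.val (Monoid.pow_exponent_eq_one (⟨φ x, hφx⟩ : kleinFour (Fin 4)))
  exact φ.injective (by rw [map_pow, hexp, map_one])

theorem pow_three_eq_one_of_notMem_twoCore (φ : K ≃* alternatingGroup (Fin 4)) {x : K}
    (hx : x ∉ twoCore K) : x ^ 3 = 1 := by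
  rw [twoCore_eq_comap_kleinFour φ] at hx
  have hφx : (φ x) ^ 3 = 1 := (mem_kleinFour_or_pow_three_eq_one (φ x)).resolve_left hx
  exact φ.injective (by rw [map_pow, hφx, map_one])

theorem exists_notMem_twoCore (φ : K ≃* alternatingGroup (Fin 4)) :
    ∃ x, x ∉ twoCore K := by
  by_contra! h
  simpa [(Subgroup.eq_top_iff' _).2 h] using index_twoCore φ

variable {G : Type*} [Group G] {H L : Subgroup G}

theorem exists_pow_three_eq_one_notMem_map_twoCore (φ : H ≃* alternatingGroup (Fin 4)) :
    ∃ t ∈ H, t ^ 3 = 1 ∧ t ∉ (twoCore H).map H.subtype := by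
  obtain ⟨t, ht⟩ := exists_notMem_twoCore φ
  refine ⟨t, t.2, mod_cast pow_three_eq_one_of_notMem_twoCore φ ht, ?_⟩
  exact (Subgroup.mem_map_iff_mem H.subtype_injective).not.2 ht

theorem le_of_map_twoCore_le (φ : H ≃* alternatingGroup (Fin 4))
    (hcore : (twoCore H).map H.subtype ≤ L) {t : G} (htH : t ∈ H) (htL : t ∈ L)
    (ht : t ∉ (twoCore H).map H.subtype) : H ≤ L := by
  have hlt : twoCore H < L.subgroupOf H :=
    SetLike.lt_iff_le_and_exists.2 ⟨Subgroup.map_le_iff_le_comap.1 hcore, ⟨t, htH⟩, htL,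
      fun h ↦ ht (Subgroup.mem_map_of_mem H.subtype h)⟩
  have hmax : IsCoatom (twoCore H) :=
    isCoatom_of_prime_index (by rw [index_twoCore φ]; exact Nat.prime_three)
  exact Subgroup.subgroupOf_eq_top.1 (hmax.2 _ hlt)

theorem eq_of_map_twoCore_eq (φ : H ≃* alternatingGroup (Fin 4))
    (ψ : L ≃* alternatingGroup (Fin 4))
    (hcore : (twoCore H).map H.subtype = (twoCore L).map L.subtype) {t : G} (htH : t ∈ H)
    (htL : t ∈ L) (ht : t ∉ (twoCore L).map L.subtype) : H = L :=
  le_antisymm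
    (le_of_map_twoCore_le φ (hcore.trans_le (Subgroup.map_subtype_le _)) htH htL (hcore ▸ ht))
    (le_of_map_twoCore_le ψ (hcore.ge.trans (Subgroup.map_subtype_le _)) htL htH ht)

end AltFour

section Reduction

variable {p k : ℕ}

theorem isLocalHom_zmod_pow (π : ZMod (p ^ k) →+* ZMod p) : IsLocalHom π where
  map_nonunit x hx := by
    obtain ⟨n, rfl⟩ := ZMod.intCast_surjective x
    rw [map_intCast, ZMod.coe_int_isUnit_iff_isCoprime] at hx
    rw [ZMod.coe_int_isUnit_iff_isCoprime, Nat.cast_pow]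
    exact hx.pow_left

theorem pow_pred_mul_self_eq_zero (hk : 2 ≤ k) :
    (p : ZMod (p ^ k)) ^ (k - 1) * p ^ (k - 1) = 0 := by
  rw [← pow_add]
  have hzero : (p : ZMod (p ^ k)) ^ k = 0 := mod_cast ZMod.natCast_self (p ^ k)
  exact pow_eq_zero_of_le (by lia) hzero

variable [NeZero p]

theorem pow_pred_mul_eq_mul_iff (hk : k ≠ 0) (π : ZMod (p ^ k) →+* ZMod p) (x y : ZMod (p ^ k)) :
    (p : ZMod (p ^ k)) ^ (k - 1) * x = p ^ (k - 1) * y ↔ π x = π y := by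
  obtain ⟨a, rfl⟩ := ZMod.natCast_zmod_surjective x
  obtain ⟨b, rfl⟩ := ZMod.natCast_zmod_surjective y
  simp only [map_natCast, ← Nat.cast_pow, ← Nat.cast_mul, ZMod.natCast_eq_natCast_iff]
  rw [← pow_sub_one_mul hk p]
  exact Nat.ModEq.mul_left_cancel_iff' (pow_ne_zero _ (NeZero.ne p))

theorem pow_pred_dvd_of_mul_eq_zero (hk : k ≠ 0) {x : ZMod (p ^ k)} (hx : p * x = 0) :
    (p : ZMod (p ^ k)) ^ (k - 1) ∣ x := by
  obtain ⟨n, rfl⟩ := ZMod.natCast_zmod_surjective x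
  rw [← Nat.cast_mul, ZMod.natCast_eq_zero_iff, ← mul_pow_sub_one hk p] at hx
  exact_mod_cast Nat.cast_dvd_cast (α := ZMod (p ^ k))
    (Nat.dvd_of_mul_dvd_mul_left (NeZero.pos p) hx)

variable {m n : Type*}

theorem pow_pred_smul_eq_smul_iff (hk : k ≠ 0) (π : ZMod (p ^ k) →+* ZMod p)
    (M N : Matrix m n (ZMod (p ^ k))) :
    (p : ZMod (p ^ k)) ^ (k - 1) • M = (p : ZMod (p ^ k)) ^ (k - 1) • N ↔ M.map π = N.map π := by
  simp only [← Matrix.ext_iff, Matrix.smul_apply, smul_eq_mul, map_apply,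
    pow_pred_mul_eq_mul_iff hk π]

theorem exists_eq_pow_pred_smul_of_smul_eq_zero (hk : k ≠ 0) {M : Matrix m n (ZMod (p ^ k))}
    (hM : (p : ZMod (p ^ k)) • M = 0) :
    ∃ N : Matrix m n (ZMod (p ^ k)), M = (p : ZMod (p ^ k)) ^ (k - 1) • N := by
  have hdvd (i : m) (j : n) : (p : ZMod (p ^ k)) ^ (k - 1) ∣ M i j :=
    pow_pred_dvd_of_mul_eq_zero hk (congr_fun₂ hM i j)
  choose N hN using hdvd
  exact ⟨of N, Matrix.ext hN⟩

end Reduction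

section TwoPower

variable {k : ℕ}

/-- The first generator of the common value of `O_2(H)`, as a matrix. -/
def fourGen₁ (k : ℕ) : Matrix (Fin 2) (Fin 2) (ZMod (2 ^ k)) :=
  !![1 + 2 ^ (k - 1), 0; 2 ^ (k - 1), 1 + 2 ^ (k - 1)]

/-- The second generator of the common value of `O_2(H)`, as a matrix. -/
def fourGen₂ (k : ℕ) : Matrix (Fin 2) (Fin 2) (ZMod (2 ^ k)) :=
  !![1, 2 ^ (k - 1); 2 ^ (k - 1), 1]

/-- The subgroup generated by the invertible matrices `fourGen₁ k` and `fourGen₂ k`, which is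
`O_2(H)` for every `H ≅ Alt(4)` when `2 ≤ k`. The generators are specified by their entries, to
avoid building their inverses into the definition. -/
def fourGroup (k : ℕ) : Subgroup (GL (Fin 2) (ZMod (2 ^ k))) :=
  Subgroup.closure {u | (u : Matrix (Fin 2) (Fin 2) (ZMod (2 ^ k))) = fourGen₁ k ∨
    (u : Matrix (Fin 2) (Fin 2) (ZMod (2 ^ k))) = fourGen₂ k}

theorem fourGen₁_eq (k : ℕ) : fourGen₁ k = 1 + (2 : ZMod (2 ^ k)) ^ (k - 1) • !![1, 0; 1, 1] := by
  simp [fourGen₁, one_fin_two]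

theorem fourGen₂_eq (k : ℕ) : fourGen₂ k = 1 + (2 : ZMod (2 ^ k)) ^ (k - 1) • !![0, 1; 1, 0] := by
  simp [fourGen₂, one_fin_two]

theorem map_ne_one_of_pow_three_eq_one (π : ZMod (2 ^ k) →+* ZMod 2)
    {t : Matrix (Fin 2) (Fin 2) (ZMod (2 ^ k))} (ht : t ^ 3 = 1) (ht1 : t ≠ 1) :
    π.mapMatrix t ≠ 1 := by
  have := isLocalHom_zmod_pow π
  have := isLocalHom_mapMatrix (n := Fin 2) π
  have h3 : IsUnit ((3 : ℕ) : Matrix (Fin 2) (Fin 2) (ZMod 2)) := by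
    rw [show ((3 : ℕ) : Matrix (Fin 2) (Fin 2) (ZMod 2)) = 1 by decide]
    exact isUnit_one
  exact fun h ↦ ht1 (eq_one_of_pow_eq_one_of_map_eq_one π.mapMatrix h3 ht h)

theorem isConj_companion_of_pow_three_eq_one (π : ZMod (2 ^ k) →+* ZMod 2)
    {t : Matrix (Fin 2) (Fin 2) (ZMod (2 ^ k))} (ht : t ^ 3 = 1) (ht1 : t ≠ 1) :
    IsConj !![0, -1; 1, -1] t := by
  have := isLocalHom_zmod_pow π
  have hred : π.mapMatrix t = !![0, 1; 1, 1] ∨ π.mapMatrix t = !![1, 1; 1, 0] :=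
    zmod_two_eq_of_pow_three_eq_one _ (by rw [← map_pow, ht, map_one])
      (map_ne_one_of_pow_three_eq_one π ht ht1)
  have hdet : π (t - 1).det = 1 := by
    rw [RingHom.map_det, map_sub, map_one]
    rcases hred with h | h <;> rw [h] <;> decide
  have hentry : π (t 1 0) = 1 := by
    change π.mapMatrix t 1 0 = 1
    rcases hred with h | h <;> rw [h] <;> rfl
  have hunit : IsUnit (t - 1) :=
    (isUnit_iff_isUnit_det _).2 (isUnit_of_map_unit π _ (by rw [hdet]; exact isUnit_one))
  have hfactor : (t - 1) * (t ^ 2 + t + 1) = 0 := by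
    calc (t - 1) * (t ^ 2 + t + 1) = t ^ 3 - 1 := by noncomm_ring
      _ = 0 := by rw [ht, sub_self]
  exact isConj_companion (hunit.mul_right_eq_zero.1 hfactor)
    (isUnit_of_map_unit π _ (by rw [hentry]; exact isUnit_one))

theorem isConj_of_pow_three_eq_one (π : ZMod (2 ^ k) →+* ZMod 2) {s t : GL (Fin 2) (ZMod (2 ^ k))}
    (hs : s ^ 3 = 1) (hs1 : s ≠ 1) (ht : t ^ 3 = 1) (ht1 : t ≠ 1) : IsConj s t := by
  have hcompanion {u : GL (Fin 2) (ZMod (2 ^ k))} (hu : u ^ 3 = 1) (hu1 : u ≠ 1) :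
      IsConj !![0, -1; 1, -1] (u : Matrix (Fin 2) (Fin 2) (ZMod (2 ^ k))) :=
    isConj_companion_of_pow_three_eq_one π (by rw [← Units.val_pow_eq_pow_val, hu, Units.val_one])
      (Units.val_eq_one.not.2 hu1)
  obtain ⟨g, hg⟩ := (hcompanion hs hs1).symm.trans (hcompanion ht ht1)
  exact isConj_iff.2 ⟨g, mul_inv_eq_iff_eq_mul.2 (Units.ext hg)⟩

theorem exists_eq_one_add_smul_of_pow_eq_one (hk : k ≠ 0)
    {a t : Matrix (Fin 2) (Fin 2) (ZMod (2 ^ k))} (ha : a ^ 2 = 1) (ht : t ^ 3 = 1)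
    (hat : (a * t) ^ 3 = 1) : ∃ P, a = 1 + (2 : ZMod (2 ^ k)) ^ (k - 1) • P := by
  have htwo : ((2 : ℕ) : ZMod (2 ^ k)) • (a - 1) = 0 := by
    rw [Nat.cast_smul_eq_nsmul, nsmul_eq_mul, mul_sub, Nat.cast_ofNat,
      two_mul_eq_two_of_pow_eq_one ha ht hat, mul_one, sub_self]
  obtain ⟨P, hP⟩ := exists_eq_pow_pred_smul_of_smul_eq_zero hk htwo
  exact ⟨P, sub_eq_iff_eq_add'.1 hP⟩

theorem eq_fourGen_of_pow_eq_one (hk : 2 ≤ k) (π : ZMod (2 ^ k) →+* ZMod 2)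
    {a t : Matrix (Fin 2) (Fin 2) (ZMod (2 ^ k))} (ha : a ^ 2 = 1) (ht : t ^ 3 = 1)
    (hat : (a * t) ^ 3 = 1) (ht1 : t ≠ 1) :
    a = 1 ∨ a = fourGen₁ k ∨ a = fourGen₂ k ∨ a = fourGen₁ k * fourGen₂ k := by
  have hk0 : k ≠ 0 := by lia
  have hq : (2 : ZMod (2 ^ k)) ^ (k - 1) * 2 ^ (k - 1) = 0 := pow_pred_mul_self_eq_zero hk
  have hsmul (M N : Matrix (Fin 2) (Fin 2) (ZMod (2 ^ k))) :
      (2 : ZMod (2 ^ k)) ^ (k - 1) • M = (2 : ZMod (2 ^ k)) ^ (k - 1) • N ↔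
        π.mapMatrix M = π.mapMatrix N :=
    pow_pred_smul_eq_smul_iff hk0 π M N
  obtain ⟨P, rfl⟩ := exists_eq_one_add_smul_of_pow_eq_one hk0 ha ht hat
  have hsum : π.mapMatrix (P + t * P * t ^ 2 + t ^ 2 * P * t) = 0 := by
    rw [← map_zero π.mapMatrix, ← hsmul, smul_sum_conj_eq_zero hq ht hat, smul_zero]
  simp only [map_add, map_mul, map_pow] at hsum
  have hlift {N : Matrix (Fin 2) (Fin 2) (ZMod (2 ^ k))} (h : π.mapMatrix P = π.mapMatrix N) :
      1 + (2 : ZMod (2 ^ k)) ^ (k - 1) • P = 1 + (2 : ZMod (2 ^ k)) ^ (k - 1) • N := by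
    rw [(hsmul P N).2 h]
  rw [fourGen₁_eq, fourGen₂_eq, one_add_smul_mul hq]
  rcases zmod_two_eq_of_sum_conj_eq_zero (by rw [← map_pow, ht, map_one])
    (map_ne_one_of_pow_three_eq_one π ht ht1) hsum with h | h | h | h
  · exact .inl ((hlift (N := 0) (by simpa using h)).trans (by simp))
  · exact .inr (.inl (hlift (by simp [h, map_fin_two])))
  · exact .inr (.inr (.inl (hlift (by simp [h, map_fin_two]))))
  · exact .inr (.inr (.inr (hlift (by simp [h, map_fin_two]))))

theorem fourGroup_eq_closure_pair {u v : GL (Fin 2) (ZMod (2 ^ k))}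
    (hu : (u : Matrix (Fin 2) (Fin 2) (ZMod (2 ^ k))) = fourGen₁ k)
    (hv : (v : Matrix (Fin 2) (Fin 2) (ZMod (2 ^ k))) = fourGen₂ k) :
    fourGroup k = Subgroup.closure {u, v} := by
  simp only [fourGroup, ← hu, ← hv, Units.ext_iff.symm]
  rfl

theorem map_twoCore_eq_fourGroup (hk : 2 ≤ k) {H : Subgroup (GL (Fin 2) (ZMod (2 ^ k)))}
    (φ : H ≃* alternatingGroup (Fin 4)) : (twoCore H).map H.subtype = fourGroup k := by
  have hq : (2 : ZMod (2 ^ k)) ^ (k - 1) * 2 ^ (k - 1) = 0 := pow_pred_mul_self_eq_zero hk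
  obtain ⟨u₁, hu₁⟩ : IsUnit (fourGen₁ k) := by
    rw [fourGen₁_eq]
    exact isUnit_one_add_smul hq _
  obtain ⟨u₂, hu₂⟩ : IsUnit (fourGen₂ k) := by
    rw [fourGen₂_eq]
    exact isUnit_one_add_smul hq _
  rw [fourGroup_eq_closure_pair hu₁ hu₂]
  obtain ⟨t, ht⟩ := exists_notMem_twoCore φ
  apply subgroup_eq_closure_pair_of_card_eq_four
  · rw [Subgroup.card_map_of_injective H.subtype_injective, card_twoCore φ]
  · rintro _ ⟨v, hv, rfl⟩
    have hvt : v * t ∉ twoCore H := fun h ↦ ht ((Subgroup.mul_mem_cancel_left _ hv).1 h)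
    let c : H →* Matrix (Fin 2) (Fin 2) (ZMod (2 ^ k)) := (Units.coeHom _).comp H.subtype
    have hc : Function.Injective c := Units.val_injective.comp H.subtype_injective
    have ht1 : t ≠ 1 := fun h ↦ ht (h ▸ one_mem _)
    simpa [Units.ext_iff, hu₁, hu₂, c] using eq_fourGen_of_pow_eq_one hk
      (ZMod.castHom (dvd_pow_self 2 (by lia)) (ZMod 2)) (a := c v) (t := c t)
      (by rw [← map_pow, sq_eq_one_of_mem_twoCore φ hv, map_one])
      (by rw [← map_pow, pow_three_eq_one_of_notMem_twoCore φ ht, map_one])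
      (by rw [← map_mul, ← map_pow, pow_three_eq_one_of_notMem_twoCore φ hvt, map_one])
      ((map_ne_one_iff c hc).2 ht1)

end TwoPower

theorem O2_of_alt4_in_GL2 (k : ℕ) (hk : 2 ≤ k)
    (H : Subgroup (Matrix.GeneralLinearGroup (Fin 2) (ZMod (2 ^ k))))
    (hH : Nonempty (↥H ≃* ↥(alternatingGroup (Fin 4)))) :
    Subgroup.map H.subtype (twoCore ↥H) =
      Subgroup.closure
        {u : Matrix.GeneralLinearGroup (Fin 2) (ZMod (2 ^ k)) |
          (u : Matrix (Fin 2) (Fin 2) (ZMod (2 ^ k))) =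
            !![1 + 2 ^ (k - 1), 0; 2 ^ (k - 1), 1 + 2 ^ (k - 1)] ∨
          (u : Matrix (Fin 2) (Fin 2) (ZMod (2 ^ k))) =
            !![1, 2 ^ (k - 1); 2 ^ (k - 1), 1]} ∧
    ∀ H₁ H₂ : Subgroup (Matrix.GeneralLinearGroup (Fin 2) (ZMod (2 ^ k))),
      Nonempty (↥H₁ ≃* ↥(alternatingGroup (Fin 4))) →
      Nonempty (↥H₂ ≃* ↥(alternatingGroup (Fin 4))) →
      ∃ g : Matrix.GeneralLinearGroup (Fin 2) (ZMod (2 ^ k)), conjSub g H₁ = H₂ := by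
  refine ⟨map_twoCore_eq_fourGroup hk hH.some, fun H₁ H₂ ⟨φ₁⟩ ⟨φ₂⟩ ↦ ?_⟩
  obtain ⟨t₁, ht₁, hcube₁, hcore₁⟩ := exists_pow_three_eq_one_notMem_map_twoCore φ₁
  obtain ⟨t₂, ht₂, hcube₂, hcore₂⟩ := exists_pow_three_eq_one_notMem_map_twoCore φ₂
  have π : ZMod (2 ^ k) →+* ZMod 2 := ZMod.castHom (dvd_pow_self 2 (by lia)) (ZMod 2)
  obtain ⟨g, hg⟩ := isConj_iff.1 <| isConj_of_pow_three_eq_one π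
    hcube₁ (ne_of_mem_of_not_mem (one_mem _) hcore₁).symm
    hcube₂ (ne_of_mem_of_not_mem (one_mem _) hcore₂).symm
  have φ : conjSub g H₁ ≃* alternatingGroup (Fin 4) :=
    (H₁.equivMapOfInjective _ (MulAut.conj g).injective).symm.trans φ₁
  have hcore : (twoCore (conjSub g H₁)).map (conjSub g H₁).subtype = (twoCore H₂).map H₂.subtype :=
    (map_twoCore_eq_fourGroup hk φ).trans (map_twoCore_eq_fourGroup hk φ₂).symm
  exact ⟨g, eq_of_map_twoCore_eq φ φ₂ hcore ⟨t₁, ht₁, hg⟩ ht₂ hcore₂⟩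
end

section
/- Let $p$ be an odd prime, $W$ a finite 2-group, and $E \le \mathrm{Aut}(W)$ a non-cyclic abelian $p$-subgroup. If for every non-identity $e \in E$ the fixed-point subgroup $C_W(e)$ contains at most one involution, then $p = 3$, $|E| = 9$, $W$ is isomorphic to an extraspecial group $2^{1+4}_+$, $2^{1+6}_-$, or $2^{1+8}_+$, and $C_W(E) = Z(W)$. -/
/-- The fixed points of a group of automorphisms `E ≤ Aut W`, `C_W(E)`, as a subgroup. -/
def fixedSubgroup {W : Type*} [Group W] (E : Subgroup (MulAut W)) : Subgroup W where
  carrier := {w : W | ∀ e ∈ E, e w = w}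
  one_mem' := fun e _ => map_one e
  mul_mem' := by
    intro a b ha hb e he
    rw [map_mul, ha e he, hb e he]
  inv_mem' := by
    intro a ha e he
    rw [map_inv, ha e he]

/-- An extraspecial group: `Z(W) = W' = Φ(W)` of order `2`
(here for 2-groups; `Φ(W) = Z(W)` is automatic). -/
def IsExtraspecial (W : Type*) [Group W] : Prop :=
  Subgroup.center W = commutator W ∧ frattini W = Subgroup.center W ∧
    Nat.card (Subgroup.center W) = 2

/-- `W` (of order `2^(1+2n)`) is of plus type: it contains an elementary abelian subgroup of
order `2^(n+1)`. -/
def IsPlusType (W : Type*) [Group W] (n : ℕ) : Prop :=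
  ∃ A : Subgroup W, Nat.card A = 2 ^ (n + 1) ∧ ∀ a ∈ A, a ^ 2 = 1

/-!
Let `A` be the acting group. Coprime action generates `W` by the subgroups `C_W(a)`, `a ≠ 1`. If
`B` is an `A`-invariant abelian subgroup, each `B ⊓ C_W(a)` has at most one involution, so `A`
centralizes it, and hence `A` centralizes `B`. By the three subgroups lemma this forces `[W, A]` to
have nilpotency class at most two.

For the same reason each `C_W(a)` on which `A` acts nontrivially, called a *component*, is a
quaternion group of order `8` with centre `C_W(A)`, and `p = 3`. The components generate `W`, so
that `W = [W, A]` has class two and `C_W(A) = Z(W)` has order `2`. Distinct components commute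
elementwise: `W` is their central product. Noncentral elements of two distinct components have
stabilizers of index at most `3` in `A` that intersect trivially, so `|A| = 9`. As
`C_W(a) = C_W(a⁻¹)`, there are between two and four components.

The type of `W` is read off from a Gauss sum, the sum over `W` of the signs `±1` recording whether
`g ^ 2 = 1`. It is multiplicative over central products up to the order of the amalgamated centre,
and equals `-4` on a quaternion group of order `8`, so for `m` components it is `2 * (-2) ^ m`; and
it is positive exactly when `W` is of plus type.
-/

open Subgroup
open scoped Pointwise commutatorElement

section PGroups

variable {p : ℕ}

theorem exists_notMem_pow_mem {G : Type*} [Group G] (hG : IsPGroup p G) {H : Subgroup G}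
    (hH : H ≠ ⊤) : ∃ x, x ∉ H ∧ x ^ p ∈ H := by
  obtain ⟨g, -, hg⟩ := SetLike.exists_of_lt hH.lt_top
  by_contra! h
  have hpow (k : ℕ) : g ^ p ^ k ∉ H := by
    induction k with
    | zero => simpa using hg
    | succ k ih => rw [pow_succ, pow_mul]; exact h _ ih
  obtain ⟨k, hk⟩ := hG g
  exact hpow k (hk ▸ H.one_mem)

variable [Fact p.Prime]

theorem coprime_card_of_isPGroup {G : Type*} [Group G] [Finite G] (hG : IsPGroup p G) {n : ℕ}
    (hn : p.Coprime n) : (Nat.card G).Coprime n := by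
  obtain ⟨k, hk⟩ := IsPGroup.iff_card.mp hG
  exact hk ▸ hn.pow_left k

theorem isMulCommutative_of_card_dvd_prime_pow_three {G : Type*} [Group G]
    (hG : Nat.card G ∣ p ^ 3) (hne : Nat.card G ≠ p ^ 3) : IsMulCommutative G := by
  obtain ⟨k, hk, hcard⟩ := (Nat.dvd_prime_pow Fact.out).mp hG
  obtain hk1 | rfl : k ≤ 1 ∨ k = 2 := by
    have : k ≠ 3 := by rintro rfl; exact hne hcard
    omega
  · have : IsCyclic G :=
      isCyclic_of_card_dvd_prime (hcard ▸ (pow_dvd_pow p hk1).trans (pow_one p).dvd)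
    infer_instance
  · exact IsPGroup.isMulCommutative_of_card_eq_prime_sq hcard

theorem isCyclic_of_card_lt_sq {A : Type*} [Group A] [Finite A] (hA : IsPGroup p A)
    (h : Nat.card A < p ^ 2) : IsCyclic A := by
  obtain ⟨k, hk⟩ := IsPGroup.iff_card.mp hA
  have hk2 : k < 2 := (Nat.pow_lt_pow_iff_right (Fact.out : p.Prime).one_lt).mp (hk ▸ h)
  exact isCyclic_of_card_dvd_prime
    (hk ▸ (pow_dvd_pow p (Nat.le_of_lt_succ hk2)).trans (pow_one p).dvd)

variable {A : Type*} [CommGroup A] [Finite A]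

theorem isCyclic_of_forall_pow_eq_one_mem_zpowers (hA : IsPGroup p A) {b : A} (hb : b ^ p = 1)
    (h : ∀ x : A, x ^ p = 1 → x ∈ zpowers b) : IsCyclic A := by
  let P : Subgroup A := (powMonoidHom p).range
  have hindex : Nat.card (A ⧸ P) ∣ p := by
    change P.index ∣ p
    rw [index_range]
    refine (card_dvd_of_le fun x hx ↦ h x hx).trans ?_
    rw [Nat.card_zpowers]
    exact orderOf_dvd_of_pow_eq_one hb
  have := isCyclic_of_card_dvd_prime hindex
  obtain ⟨g, hg⟩ := IsCyclic.exists_generator (α := A ⧸ P)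
  induction g using QuotientGroup.induction_on with | H g
  have decompose (x : A) : ∃ (m : ℤ) (y : A), x = g ^ m * y ^ p := by
    obtain ⟨m, hm⟩ := hg x
    obtain ⟨y, hy⟩ := QuotientGroup.eq.mp (hm : ((g ^ m : A) : A ⧸ P) = x)
    exact ⟨m, y, eq_mul_of_inv_mul_eq hy.symm⟩
  have decompose_pow (k : ℕ) (x : A) : ∃ (m : ℤ) (y : A), x = g ^ m * y ^ p ^ k := by
    induction k with
    | zero => exact ⟨0, x, by simp⟩
    | succ k ih =>
      obtain ⟨m, y, rfl⟩ := ih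
      obtain ⟨n, z, rfl⟩ := decompose y
      refine ⟨m + n * p ^ k, z, ?_⟩
      rw [mul_pow, ← pow_mul, ← pow_succ', zpow_add, zpow_mul, mul_assoc]
      norm_cast
  obtain ⟨k, hk⟩ := IsPGroup.iff_card.mp hA
  refine ⟨g, fun x ↦ ?_⟩
  obtain ⟨m, y, rfl⟩ := decompose_pow k x
  rw [← hk, pow_card_eq_one', mul_one]
  exact zpow_mem (mem_zpowers g) m

theorem exists_pow_eq_one_notMem_zpowers (hA : IsPGroup p A)
    (hAc : ¬ IsCyclic A) : ∃ a b : A, a ^ p = 1 ∧ b ^ p = 1 ∧ b ≠ 1 ∧ a ∉ zpowers b := by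
  by_contra! h
  have hcyclic {b : A} (hb : b ^ p = 1) (hb1 : b ≠ 1) : IsCyclic A :=
    isCyclic_of_forall_pow_eq_one_mem_zpowers hA hb fun a ha ↦ h a b ha hb hb1
  by_cases hex : ∃ b : A, b ^ p = 1 ∧ b ≠ 1
  · obtain ⟨b, hb, hb1⟩ := hex
    exact hAc (hcyclic hb hb1)
  · push Not at hex
    refine hAc (isCyclic_of_forall_pow_eq_one_mem_zpowers hA (one_pow p) fun x hx ↦ ?_)
    rw [hex x hx]
    exact one_mem _

end PGroups

section Frattini

variable {G : Type*} [Group G]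

theorem isCoatom_of_index_prime {H : Subgroup G} {q : ℕ} (hq : q.Prime) (hH : H.index = q) :
    IsCoatom H := by
  refine ⟨fun h ↦ hq.ne_one (by rw [← hH, h, index_top]), fun K hK ↦ ?_⟩
  rcases (Nat.dvd_prime hq).mp (hH ▸ index_dvd_of_le hK.le) with h | h
  · exact index_eq_one.mp h
  · have hmul := relIndex_mul_index hK.le
    rw [hH, h, Nat.mul_eq_right hq.ne_zero, relIndex_eq_one] at hmul
    exact absurd hmul hK.not_ge

theorem commutator_le_frattini [Group.IsNilpotent G] : commutator G ≤ frattini G := by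
  refine le_iInf₂ fun M hM ↦ ?_
  have : M.Normal :=
    NormalizerCondition.normal_of_coatom M Group.normalizerCondition_of_isNilpotent hM
  obtain ⟨x, -, hx⟩ := SetLike.exists_of_lt hM.lt_top
  refine this.commutator_le_of_self_sup_commutative_eq_top (H := zpowers x) (hM.2 _ ?_)
    inferInstance
  exact left_lt_sup.mpr fun h ↦ hx (h (mem_zpowers x))

theorem commutator_top_lt_of_ne_bot [Group.IsNilpotent G] {H : Subgroup G} [H.Normal]
    (hH : H ≠ ⊥) : ⁅H, ⊤⁆ < H := by
  refine (commutator_le_left H ⊤).lt_of_ne fun h ↦ hH ?_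
  have hle (n : ℕ) : H ≤ (⊤ : Subgroup G).lowerCentralSeries n := by
    induction n with
    | zero => exact le_top
    | succ n ih => exact h.ge.trans (commutator_mono ih le_rfl)
  obtain ⟨n, hn⟩ := Subgroup.nilpotent_iff_lowerCentralSeries.mp ‹Group.IsNilpotent G›
  exact le_bot_iff.mp ((hle n).trans hn.le)

end Frattini

section InvariantSubgroups

variable {A G : Type*} [Group A] [Group G] [MulDistribMulAction A G]

/-- The subgroup `C_G(a)` of the elements of `G` fixed by a single `a : A`; the elements fixed by
all of `A` form `FixedPoints.subgroup A G`. -/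
def fixedBySubgroup (G : Type*) [Group G] [MulDistribMulAction A G] (a : A) : Subgroup G :=
  (MulDistribMulAction.toMonoidHom G a).eqLocus (MonoidHom.id G)

@[simp]
theorem mem_fixedBySubgroup {a : A} {g : G} : g ∈ fixedBySubgroup G a ↔ a • g = g := Iff.rfl

theorem fixedPoints_le_fixedBySubgroup (a : A) : FixedPoints.subgroup A G ≤ fixedBySubgroup G a :=
  fun _ hg ↦ hg a

theorem fixedBySubgroup_ne_top [FaithfulSMul A G] {a : A} (ha : a ≠ 1) : fixedBySubgroup G a ≠ ⊤ :=
  fun htop ↦ ha (eq_of_smul_eq_smul (α := G) fun g ↦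
    (mem_fixedBySubgroup.mp (htop.ge (mem_top g))).trans (one_smul A g).symm)

/-- A subgroup is invariant under an action of `A` by automorphisms if every element of `A` maps
it into itself. -/
def IsInvariantSubgroup (A : Type*) {G : Type*} [Group A] [Group G] [MulDistribMulAction A G]
    (H : Subgroup G) : Prop :=
  ∀ (a : A) ⦃g : G⦄, g ∈ H → a • g ∈ H

theorem isInvariantSubgroup_of_characteristic (H : Subgroup G) [hH : H.Characteristic] :
    IsInvariantSubgroup A H :=
  fun a _ hg ↦ characteristic_iff_le_comap.mp hH (MulDistribMulAction.toMulAut A G a) hg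

theorem isInvariantSubgroup_fixedBySubgroup {A : Type*} [CommGroup A] [MulDistribMulAction A G]
    (b : A) : IsInvariantSubgroup A (fixedBySubgroup G b) :=
  fun a g hg ↦ by rw [mem_fixedBySubgroup, smul_comm, mem_fixedBySubgroup.mp hg]

namespace IsInvariantSubgroup

variable {H K : Subgroup G}

/-- The action of `A` on an invariant subgroup. -/
@[reducible]
def mulDistribMulAction (hH : IsInvariantSubgroup A H) : MulDistribMulAction A H where
  smul a h := ⟨a • h.1, hH a h.2⟩
  one_smul h := Subtype.ext (one_smul A h.1)
  mul_smul a b h := Subtype.ext (mul_smul a b h.1)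
  smul_mul a h k := Subtype.ext (smul_mul' a h.1 k.1)
  smul_one a := Subtype.ext (smul_one a)

theorem inf (hH : IsInvariantSubgroup A H) (hK : IsInvariantSubgroup A K) :
    IsInvariantSubgroup A (H ⊓ K) :=
  fun a _ hg ↦ ⟨hH a hg.1, hK a hg.2⟩

theorem centralizer (hH : IsInvariantSubgroup A H) :
    IsInvariantSubgroup A (centralizer (H : Set G)) := by
  refine fun a g hg ↦ mem_centralizer_iff.mpr fun h hh ↦ smul_left_cancel a⁻¹ ?_
  simpa only [smul_mul', inv_smul_smul] using mem_centralizer_iff.mp hg _ (hH a⁻¹ hh)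

theorem commutator (hH : IsInvariantSubgroup A H) (hK : IsInvariantSubgroup A K) :
    IsInvariantSubgroup A ⁅H, K⁆ := by
  intro a
  suffices ⁅H, K⁆ ≤ ⁅H, K⁆.comap (MulDistribMulAction.toMonoidHom G a) from this
  refine commutator_le.mpr fun h hh k hk ↦ ?_
  rw [mem_comap, map_commutatorElement]
  exact commutator_mem_commutator (hH a hh) (hK a hk)

theorem index_stabilizer_le_of_card_lt_sq [Finite G] {p : ℕ} [Fact p.Prime]
    (hH : IsInvariantSubgroup A H) (hA : IsPGroup p A) (hcard : Nat.card H < p ^ 2) {x : G}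
    (hx : x ∈ H) : (MulAction.stabilizer A x).index ≤ p := by
  obtain ⟨k, hk⟩ := hA.card_orbit x
  have horbit : Nat.card (MulAction.orbit A x) ≤ Nat.card H :=
    Nat.card_mono (Set.toFinite _) (Set.range_subset_iff.mpr fun a ↦ hH a hx)
  have hk2 : k < 2 := (Nat.pow_lt_pow_iff_right (Fact.out : p.Prime).one_lt).mp
    (hk ▸ horbit.trans_lt hcard)
  calc (MulAction.stabilizer A x).index = p ^ k := by
        rw [MulAction.index_stabilizer, ← Nat.card_coe_set_eq, hk]
    _ ≤ p ^ 1 := Nat.pow_le_pow_right (Fact.out : p.Prime).pos (Nat.le_of_lt_succ hk2)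
    _ = p := pow_one p

end IsInvariantSubgroup

/-- The induced action on the abelianization. -/
@[reducible]
def abelianizationAction (A G : Type*) [Group A] [Group G] [MulDistribMulAction A G] :
    MulDistribMulAction A (Abelianization G) where
  smul a := Abelianization.map (MulDistribMulAction.toMonoidHom G a)
  one_smul x := by
    induction x using QuotientGroup.induction_on with
    | H g => exact congrArg Abelianization.of (one_smul A g)
  mul_smul a b x := by
    induction x using QuotientGroup.induction_on with
    | H g => exact congrArg Abelianization.of (mul_smul a b g)
  smul_mul a := map_mul (Abelianization.map (MulDistribMulAction.toMonoidHom G a))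
  smul_one a := map_one (Abelianization.map (MulDistribMulAction.toMonoidHom G a))

end InvariantSubgroups

section CoprimeAction

variable {A G : Type*} [Group A] [Group G] [MulDistribMulAction A G] {p : ℕ}

theorem pow_smul_eq_mul_pow {a : A} {g c : G} (hg : a • g = g * c) (hc : a • c = c) (n : ℕ) :
    a ^ n • g = g * c ^ n := by
  induction n with
  | zero => simp
  | succ n ih => rw [pow_succ', mul_smul, ih, smul_mul', smul_pow', hg, hc, mul_assoc, ← pow_succ']

theorem smul_eq_of_smul_inv_mul_smul_eq (hA : IsPGroup p A) {a : A} {g : G}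
    (hcop : (orderOf (g⁻¹ * a • g)).Coprime p) (h : a • (g⁻¹ * a • g) = g⁻¹ * a • g) :
    a • g = g := by
  obtain ⟨n, hn⟩ := hA a
  set c := g⁻¹ * a • g with hc
  have hpow : g * c ^ p ^ n = g := by
    rw [← pow_smul_eq_mul_pow (by simp [hc]) h, hn, one_smul]
  have hc1 : c = 1 := by
    rw [← orderOf_eq_one_iff]
    exact (hcop.pow_right n).eq_one_of_dvd (orderOf_dvd_of_pow_eq_one (by simpa using hpow))
  exact (inv_mul_eq_one.mp hc1).symm

theorem exists_fixed_mem_coset [Fact p.Prime] (hA : IsPGroup p A) {N : Subgroup G} [Finite N]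
    (hNp : ¬ p ∣ Nat.card N) (hN : IsInvariantSubgroup A N) {g : G}
    (hg : ∀ a : A, g⁻¹ * a • g ∈ N) : ∃ x ∈ FixedPoints.subgroup A G, g⁻¹ * x ∈ N := by
  let coset : SubMulAction A G :=
    { carrier := g • (N : Set G)
      smul_mem' := fun a x hx ↦ by
        rw [mem_leftCoset_iff] at hx ⊢
        have hmul : g⁻¹ * a • g * a • (g⁻¹ * x) = g⁻¹ * a • x := by
          rw [mul_assoc, ← smul_mul', mul_inv_cancel_left]
        exact hmul ▸ N.mul_mem (hg a) (hN a hx) }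
  have hcard : Nat.card coset = Nat.card N := Set.natCard_smul_set g (N : Set G)
  have : Finite coset := Nat.finite_of_card_ne_zero (hcard ▸ Nat.card_pos.ne')
  obtain ⟨x, hx⟩ := hA.nonempty_fixed_point_of_prime_not_dvd_card coset (hcard ▸ hNp)
  exact ⟨x, fun a ↦ congrArg Subtype.val (hx a), (mem_leftCoset_iff g).mp x.2⟩

theorem prod_pow_smul_mem_fixedBySubgroup {V : Type*} [CommGroup V] [MulDistribMulAction A V]
    {b : A} (hb : b ^ p = 1) (v : V) :
    ∏ i ∈ Finset.range p, b ^ i • v ∈ fixedBySubgroup V b := by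
  rw [mem_fixedBySubgroup, Finset.smul_prod']
  simp only [smul_smul, ← pow_succ']
  refine mul_right_cancel (b := b ^ 0 • v) ?_
  rw [← Finset.prod_range_succ' (fun i ↦ b ^ i • v), Finset.prod_range_succ, hb, pow_zero]

end CoprimeAction

section CoprimeGeneration

variable {A : Type*} [CommGroup A] [Finite A] {p : ℕ} [Fact p.Prime]

/- The product of all `(a * b ^ i) ^ j • v` is a product of norms for the subgroups generated by the
`a * b ^ i`. Its factors with `j = 0` give `v ^ p`; for fixed `j ≠ 0` the factors form a translate
of the norm of `v` for the subgroup generated by `b ^ j`. -/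
theorem pow_mem_of_fixedBySubgroup_le {V : Type*} [CommGroup V] [MulDistribMulAction A V]
    (hA : IsPGroup p A) (hAc : ¬ IsCyclic A) {X : Subgroup V}
    (hX : ∀ a : A, a ≠ 1 → fixedBySubgroup V a ≤ X) (v : V) : v ^ p ∈ X := by
  obtain ⟨a, b, ha, hb, hb1, hab⟩ := exists_pow_eq_one_notMem_zpowers hA hAc
  have hall : ∏ i ∈ Finset.range p, ∏ j ∈ Finset.range p, (a * b ^ i) ^ j • v ∈ X := by
    refine X.prod_mem fun i _ ↦ hX (a * b ^ i) (fun h ↦ hab ?_)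
      (prod_pow_smul_mem_fixedBySubgroup ?_ v)
    · rw [eq_inv_of_mul_eq_one_left h]
      exact inv_mem (pow_mem (mem_zpowers b) i)
    · rw [mul_pow, ha, ← pow_mul, mul_comm i, pow_mul, hb, one_pow, one_mul]
  have hne_zero :
      ∏ j ∈ (Finset.range p).erase 0, ∏ i ∈ Finset.range p, (a * b ^ i) ^ j • v ∈ X := by
    refine X.prod_mem fun j hj ↦ hX (b ^ j) ?_ ?_
    · rw [Finset.mem_erase, Finset.mem_range] at hj
      exact pow_ne_one_of_lt_orderOf hj.1 (by rw [orderOf_eq_prime hb hb1]; exact hj.2)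
    · have htranslate : ∏ i ∈ Finset.range p, (a * b ^ i) ^ j • v =
          a ^ j • ∏ i ∈ Finset.range p, (b ^ j) ^ i • v := by
        simp only [Finset.smul_prod', smul_smul, mul_pow, ← pow_mul, mul_comm]
      rw [htranslate]
      refine isInvariantSubgroup_fixedBySubgroup (b ^ j) (a ^ j)
        (prod_pow_smul_mem_fixedBySubgroup ?_ v)
      rw [← pow_mul, mul_comm, pow_mul, hb, one_pow]
  have hp0 : 0 ∈ Finset.range p := Finset.mem_range.mpr (Fact.out : p.Prime).pos
  rw [Finset.prod_comm, ← Finset.mul_prod_erase _ _ hp0] at hall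
  simpa using (X.mul_mem_cancel_right hne_zero).mp hall

theorem eq_top_of_fixedBySubgroup_le_of_comm {V : Type*} [CommGroup V] [MulDistribMulAction A V]
    (hA : IsPGroup p A) (hAc : ¬ IsCyclic A) (hV : (Nat.card V).Coprime p) {X : Subgroup V}
    (hX : ∀ a : A, a ≠ 1 → fixedBySubgroup V a ≤ X) : X = ⊤ := by
  refine eq_top_iff.mpr fun v _ ↦ ?_
  obtain ⟨w, rfl⟩ := (powCoprime hV).surjective v
  exact pow_mem_of_fixedBySubgroup_le hA hAc hX w

theorem eq_top_of_fixedBySubgroup_le {G : Type*} [Group G] [Finite G] [Group.IsNilpotent G]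
    [MulDistribMulAction A G] (hA : IsPGroup p A) (hAc : ¬ IsCyclic A) (hG : (Nat.card G).Coprime p)
    {X : Subgroup G} (hX : ∀ a : A, a ≠ 1 → fixedBySubgroup G a ≤ X) : X = ⊤ := by
  let := abelianizationAction A G
  have hquotient : X.map Abelianization.of = ⊤ := by
    have hcard : (Nat.card (Abelianization G)).Coprime p :=
      hG.coprime_dvd_left (card_quotient_dvd_card (commutator G))
    refine eq_top_of_fixedBySubgroup_le_of_comm hA hAc hcard fun a ha v hv ↦ ?_
    obtain ⟨g, rfl⟩ := QuotientGroup.mk_surjective v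
    have hcoset (b : zpowers a) : g⁻¹ * b • g ∈ commutator G := by
      have : b.1 ∈ MulAction.stabilizer A (Abelianization.of g) :=
        zpowers_le.mpr (MulAction.mem_stabilizer_iff.mpr hv) b.2
      exact QuotientGroup.eq.mp this.symm
    obtain ⟨x, hx, hgx⟩ := exists_fixed_mem_coset (hA.to_subgroup (zpowers a))
      ((Nat.Prime.coprime_iff_not_dvd Fact.out).mp
        (hG.coprime_dvd_left (card_subgroup_dvd_card _)).symm)
      (isInvariantSubgroup_of_characteristic _) hcoset
    exact ⟨x, hX a ha (hx ⟨a, mem_zpowers a⟩), (QuotientGroup.eq.mpr hgx).symm⟩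
  refine frattini_nongenerating (top_le_iff.mp ?_)
  calc ⊤ = X ⊔ commutator G := by
        rw [← Abelianization.ker_of, ← comap_map_eq, hquotient, comap_top]
    _ ≤ X ⊔ frattini G := sup_le_sup_left commutator_le_frattini X

end CoprimeGeneration


section ActionCommutator

variable {A G : Type*} [Group A] [Group G] [MulDistribMulAction A G]

/-- The subgroup `[G, A]` generated by the elements `g⁻¹ * a • g`. -/
def actionCommutator (A G : Type*) [Group A] [Group G] [MulDistribMulAction A G] : Subgroup G :=
  closure (Set.range fun x : A × G ↦ x.2⁻¹ * x.1 • x.2)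

theorem inv_mul_smul_mem_actionCommutator (a : A) (g : G) : g⁻¹ * a • g ∈ actionCommutator A G :=
  subset_closure ⟨(a, g), rfl⟩

theorem actionCommutator_le {H : Subgroup G} :
    actionCommutator A G ≤ H ↔ ∀ (a : A) (g : G), g⁻¹ * a • g ∈ H := by
  rw [actionCommutator, closure_le, Set.range_subset_iff, Prod.forall]
  rfl

instance actionCommutator_normal : (actionCommutator A G).Normal := by
  refine ⟨fun c hc g ↦ ?_⟩
  suffices actionCommutator A G ≤ (actionCommutator A G).comap (MulAut.conj g).toMonoidHom from
    this hc
  refine actionCommutator_le.mpr fun a x ↦ ?_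
  have hconj : MulAut.conj g (x⁻¹ * a • x) =
      ((x * g⁻¹)⁻¹ * a • (x * g⁻¹)) * ((g⁻¹)⁻¹ * a • g⁻¹)⁻¹ := by
    simp [mul_assoc]
  change MulAut.conj g _ ∈ actionCommutator A G
  rw [hconj]
  exact mul_mem (inv_mul_smul_mem_actionCommutator a _)
    (inv_mem (inv_mul_smul_mem_actionCommutator a _))

theorem isInvariantSubgroup_actionCommutator : IsInvariantSubgroup A (actionCommutator A G) := by
  intro a
  suffices actionCommutator A G ≤
      (actionCommutator A G).comap (MulDistribMulAction.toMonoidHom G a) from this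
  refine actionCommutator_le.mpr fun b x ↦ ?_
  have hconj : a • (x⁻¹ * b • x) = (a • x)⁻¹ * (a * b * a⁻¹) • a • x := by
    simp [smul_mul', mul_smul]
  change a • (_ : G) ∈ actionCommutator A G
  rw [hconj]
  exact inv_mul_smul_mem_actionCommutator (a * b * a⁻¹) (a • x)

theorem inv_mul_smul_mul_of_smul_eq {a : A} {x : G} (hx : a • x = x) (g : G) :
    (x * g)⁻¹ * a • (x * g) = g⁻¹ * a • g := by
  rw [smul_mul', hx, mul_inv_rev, mul_assoc, inv_mul_cancel_left]

theorem commute_inv_mul_smul {a : A} {c g : G} (hc : a • c = c) (hcg : a • ⁅c, g⁆ = ⁅c, g⁆) :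
    Commute c (g⁻¹ * a • g) := by
  rw [commutatorElement_def] at hcg
  simp only [smul_mul', smul_inv', hc, mul_assoc, mul_right_inj] at hcg
  have hswap := congrArg (fun x ↦ g⁻¹ * x⁻¹ * a • g) hcg
  exact Eq.symm (by simpa [mul_assoc] using hswap)

theorem mem_center_of_commutatorElement_mem_fixedPoints (hGA : actionCommutator A G = ⊤) {c : G}
    (hc : c ∈ FixedPoints.subgroup A G) (h : ∀ g, ⁅c, g⁆ ∈ FixedPoints.subgroup A G) :
    c ∈ center G := by
  have hle : actionCommutator A G ≤ centralizer {c} := actionCommutator_le.mpr fun a g ↦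
    mem_centralizer_singleton_iff.mpr (commute_inv_mul_smul (hc a) (h g a)).symm
  rw [hGA] at hle
  exact mem_center_iff.mpr fun g ↦ mem_centralizer_singleton_iff.mp (hle (mem_top g))

theorem le_center_of_normal_le_fixedPoints (hGA : actionCommutator A G = ⊤) {B : Subgroup G}
    [B.Normal] (h : B ≤ FixedPoints.subgroup A G) : B ≤ center G := fun _ hc ↦
  mem_center_of_commutatorElement_mem_fixedPoints hGA (h hc) fun g ↦
    h (commutator_le_left B ⊤ (commutator_mem_commutator hc (mem_top g)))

end ActionCommutator

section CoprimeActionCommutator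

variable {A G : Type*} [Group A] [Group G] [Finite G] [MulDistribMulAction A G] {p : ℕ}
  [Fact p.Prime] (hA : IsPGroup p A) (hG : (Nat.card G).Coprime p)
include hA hG

theorem exists_eq_mul_actionCommutator (g : G) :
    ∃ x ∈ FixedPoints.subgroup A G, ∃ r ∈ actionCommutator A G, g = x * r := by
  obtain ⟨x, hx, hgx⟩ := exists_fixed_mem_coset hA
    ((Nat.Prime.coprime_iff_not_dvd Fact.out).mp
      (hG.coprime_dvd_left (card_subgroup_dvd_card _)).symm)
    isInvariantSubgroup_actionCommutator fun a ↦ inv_mul_smul_mem_actionCommutator a g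
  exact ⟨x, hx, (g⁻¹ * x)⁻¹, inv_mem hgx, by group⟩

theorem actionCommutator_actionCommutator :
    letI := (isInvariantSubgroup_actionCommutator (A := A) (G := G)).mulDistribMulAction
    actionCommutator A (actionCommutator A G) = ⊤ := by
  let := (isInvariantSubgroup_actionCommutator (A := A) (G := G)).mulDistribMulAction
  suffices actionCommutator A G ≤
      (actionCommutator A (actionCommutator A G)).map (Subgroup.subtype _) from
    top_le_iff.mp fun r _ ↦ (mem_map_iff_mem Subtype.val_injective).mp (this r.2)
  refine actionCommutator_le.mpr fun a g ↦ ?_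
  obtain ⟨x, hx, r, hr, rfl⟩ := exists_eq_mul_actionCommutator hA hG g
  exact ⟨_, inv_mul_smul_mem_actionCommutator a (⟨r, hr⟩ : actionCommutator A G),
    (inv_mul_smul_mul_of_smul_eq (hx a) r).symm⟩

theorem actionCommutator_le_centralizer_fixedPoints
    (h : ⁅actionCommutator A G, (⊤ : Subgroup G)⁆ ≤ FixedPoints.subgroup A G) :
    actionCommutator A G ≤ centralizer (FixedPoints.subgroup A G) := by
  refine actionCommutator_le.mpr fun a g ↦ mem_centralizer_iff.mpr fun c hc ↦ ?_
  obtain ⟨x, hx, r, hr, rfl⟩ := exists_eq_mul_actionCommutator hA hG g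
  rw [inv_mul_smul_mul_of_smul_eq (hx a)]
  refine commute_inv_mul_smul (hc a) (h ?_ a)
  rw [commutator_comm]
  exact commutator_mem_commutator (mem_top c) hr

theorem fixedPoints_actionCommutator_ne_top (hne : FixedPoints.subgroup A G ≠ ⊤) :
    letI := (isInvariantSubgroup_actionCommutator (A := A) (G := G)).mulDistribMulAction
    FixedPoints.subgroup A (actionCommutator A G) ≠ ⊤ := by
  refine fun htop ↦ hne (eq_top_iff.mpr fun g _ a ↦ ?_)
  obtain ⟨x, hx, r, hr, rfl⟩ := exists_eq_mul_actionCommutator hA hG g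
  rw [smul_mul', hx a]
  exact congrArg (x * ·) (congrArg Subtype.val (htop.ge (mem_top ⟨r, hr⟩) a))

end CoprimeActionCommutator

section ActsTriviallyOnAbelian

variable {A G : Type*} [Group A] [Group G] [MulDistribMulAction A G]

/-- Every `A`-invariant abelian subgroup of `G` is fixed pointwise by `A`. This is the hypothesis of
the reduction to nilpotency class two in the style of Hall and Higman. -/
def ActsTriviallyOnAbelian (A G : Type*) [Group A] [Group G] [MulDistribMulAction A G] : Prop :=
  ∀ B : Subgroup G, IsInvariantSubgroup A B → IsMulCommutative B → B ≤ FixedPoints.subgroup A G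

namespace ActsTriviallyOnAbelian

variable (h : ActsTriviallyOnAbelian A G) (hGA : actionCommutator A G = ⊤)
include h hGA

/- If `[L (n + 1), G]` is central, then by the three subgroups lemma `L (n + 1)` commutes with the
commutator subgroup, in which it lies; so it is abelian, hence central. -/
theorem commutator_le_center [Group.IsNilpotent G] : commutator G ≤ center G := by
  let L := (⊤ : Subgroup G).lowerCentralSeries
  have hL : Antitone L := Subgroup.lowerCentralSeries_antitone _
  have descend (n : ℕ) (hn : L (n + 2) ≤ center G) : L (n + 1) ≤ center G := by
    have hbot : ⁅⁅L (n + 1), ⊤⁆, (⊤ : Subgroup G)⁆ = ⊥ :=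
      commutator_top_right_eq_bot_iff_le_center.mpr hn
    have hcomm : ⁅commutator G, L (n + 1)⁆ = ⊥ :=
      commutator_commutator_eq_bot_of_rotate (commutator_comm ⊤ (L (n + 1)) ▸ hbot) hbot
    have hle : L (n + 1) ≤ commutator G :=
      (hL (Nat.le_add_left 1 n)).trans_eq top_lowerCentralSeries_one
    have habelian : IsMulCommutative (L (n + 1)) :=
      commutator_self_eq_bot_iff.mp (le_bot_iff.mp (hcomm ▸ commutator_mono hle le_rfl))
    exact le_center_of_normal_le_fixedPoints hGA
      (h _ (isInvariantSubgroup_of_characteristic _) habelian)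
  have descend_to_one (n : ℕ) (hn : L (n + 1) ≤ center G) : L 1 ≤ center G := by
    induction n with
    | zero => exact hn
    | succ n ih => exact ih (descend n hn)
  obtain ⟨n, hn⟩ := Subgroup.nilpotent_iff_lowerCentralSeries.mp ‹Group.IsNilpotent G›
  rw [← top_lowerCentralSeries_one]
  exact descend_to_one n ((hL n.le_succ).trans (hn.trans_le bot_le))

theorem fixedPoints_eq_center (hG : commutator G ≤ center G) :
    FixedPoints.subgroup A G = center G := by
  have hcenter : center G ≤ FixedPoints.subgroup A G :=
    h _ (isInvariantSubgroup_of_characteristic _) inferInstance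
  refine le_antisymm (fun c hc ↦ ?_) hcenter
  exact mem_center_of_commutatorElement_mem_fixedPoints hGA hc fun g ↦
    hcenter (hG (commutator_mem_commutator (mem_top c) (mem_top g)))

end ActsTriviallyOnAbelian

end ActsTriviallyOnAbelian

section ClassTwo

variable {G : Type*} [Group G]

/-- The homomorphism `x ↦ ⁅x, g⁆` into the centre of a group of nilpotency class at most two. -/
def commutatorHom (hG : commutator G ≤ center G) (g : G) : G →* center G where
  toFun x := ⟨⁅x, g⁆, hG (commutator_mem_commutator (mem_top x) (mem_top g))⟩
  map_one' := Subtype.ext (commutatorElement_one_left g)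
  map_mul' x y := Subtype.ext <| by
    have hy : ⁅y, g⁆ ∈ center G := hG (commutator_mem_commutator (mem_top y) (mem_top g))
    simp only [coe_mul, commutatorElement_mul_left_eq_conj_mul]
    rw [mem_center_iff.mp hy x, mul_inv_cancel_right, mem_center_iff.mp hy]

variable (hG : commutator G ≤ center G)
include hG

theorem ker_commutatorHom (g : G) : (commutatorHom hG g).ker = centralizer {g} := by
  ext x
  rw [MonoidHom.mem_ker, Subtype.ext_iff, mem_centralizer_singleton_iff]
  exact commutatorElement_eq_one_iff_mul_comm

theorem commutatorElement_mul_left_of_commutator_le_center (x y g : G) :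
    ⁅x * y, g⁆ = ⁅x, g⁆ * ⁅y, g⁆ :=
  congrArg Subtype.val (map_mul (commutatorHom hG g) x y)

variable (hZ : Nat.card (center G) = 2)
include hZ

theorem sq_mem_center_of_commutator_le_center (x : G) : x ^ 2 ∈ center G := by
  refine mem_center_iff.mpr fun g ↦ ?_
  have hker : x ^ 2 ∈ (commutatorHom hG g).ker := by
    rw [MonoidHom.mem_ker, map_pow, ← hZ, pow_card_eq_one']
  rw [ker_commutatorHom] at hker
  exact (mem_centralizer_singleton_iff.mp hker).symm

theorem mul_sq_of_commutator_le_center (x y : G) : (x * y) ^ 2 = ⁅x, y⁆ * x ^ 2 * y ^ 2 := by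
  have hc (w : G) : w * ⁅x, y⁆ = ⁅x, y⁆ * w :=
    mem_center_iff.mp (hG (commutator_mem_commutator (mem_top x) (mem_top y))) w
  have hy : y ^ 2 * x = x * y ^ 2 :=
    (mem_center_iff.mp (sq_mem_center_of_commutator_le_center hG hZ y) x).symm
  calc (x * y) ^ 2 = x * y * (⁅x, y⁆ * (y * x)) := by rw [sq, commutatorElement_def]; group
    _ = ⁅x, y⁆ * x * (y ^ 2 * x) := by rw [← mul_assoc, hc, sq]; simp only [mul_assoc]
    _ = ⁅x, y⁆ * x ^ 2 * y ^ 2 := by rw [hy, sq x]; simp only [mul_assoc]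

theorem index_centralizer_singleton_eq_two {g : G} (hg : g ∉ center G) :
    (centralizer {g}).index = 2 := by
  rw [← ker_commutatorHom hG, index_ker]
  refine ((Nat.prime_two.dvd_iff_eq fun h ↦ hg ?_).mp (hZ ▸ card_subgroup_dvd_card _)).symm
  have hbot := card_eq_one.mp h
  rw [MonoidHom.range_eq_bot_iff, ← MonoidHom.ker_eq_top_iff, ker_commutatorHom] at hbot
  exact mem_center_iff.mpr fun x ↦ mem_centralizer_singleton_iff.mp (hbot ▸ mem_top x)

theorem frattini_le_center_of_commutator_le_center : frattini G ≤ center G := by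
  refine fun g hg ↦ mem_center_iff.mpr fun x ↦ ?_
  by_cases hx : x ∈ center G
  · exact (mem_center_iff.mp hx g).symm
  · have hcoatom :=
      isCoatom_of_index_prime Nat.prime_two (index_centralizer_singleton_eq_two hG hZ hx)
    exact (mem_centralizer_singleton_iff.mp (frattini_le_coatom hcoatom hg)).symm

theorem isExtraspecial_of_commutator_le_center [Finite G] [Group.IsNilpotent G]
    (hne : commutator G ≠ ⊥) : IsExtraspecial G := by
  have hcomm : center G = commutator G := by
    refine (eq_of_le_of_card_ge hG ?_).symm
    rw [hZ]
    exact (one_lt_card_iff_ne_bot _).mpr hne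
  exact ⟨hcomm, (frattini_le_center_of_commutator_le_center hG hZ).antisymm
    (hcomm.trans_le commutator_le_frattini), hZ⟩

end ClassTwo

section UniqueInvolution

variable {G : Type*} [Group G]

theorem orderOf_sq_eq_two {m : G} (hm : orderOf m = 4) : orderOf (m ^ 2) = 2 := by
  rw [orderOf_pow' m two_ne_zero, hm]
  rfl

variable (hG : IsPGroup 2 G) (hinv : {g : G | orderOf g = 2}.Subsingleton)
include hinv

theorem map_eq_self_of_orderOf_eq_two (e : G ≃* G) {z : G} (hz : orderOf z = 2) : e z = z :=
  hinv ((MulEquiv.orderOf_eq e z).trans hz) hz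

theorem mem_center_of_orderOf_eq_two {z : G} (hz : orderOf z = 2) : z ∈ center G :=
  mem_center_iff.mpr fun g ↦
    mul_inv_eq_iff_eq_mul.mp (map_eq_self_of_orderOf_eq_two hinv (MulAut.conj g) hz)

theorem eq_one_or_eq_of_sq_eq_one {z : G} (hz : orderOf z = 2) {x : G} (hx : x ^ 2 = 1) :
    x = 1 ∨ x = z := by
  by_cases h : x = 1
  · exact .inl h
  · exact .inr (hinv (orderOf_eq_prime hx h) hz)

theorem card_eq_two_of_forall_sq_eq_one {H : Subgroup G} {z : G} (hz : orderOf z = 2)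
    (hzH : z ∈ H) (hH : ∀ h ∈ H, h ^ 2 = 1) : Nat.card H = 2 := by
  have hzpowers : H = zpowers z := by
    refine le_antisymm (fun h hh ↦ ?_) (zpowers_le.mpr hzH)
    rcases eq_one_or_eq_of_sq_eq_one hinv hz (hH h hh) with rfl | rfl
    exacts [one_mem _, mem_zpowers _]
  rw [hzpowers, Nat.card_zpowers, hz]

theorem card_eq_eight_of_orderOf_eq_four (hclass : commutator G ≤ center G)
    (hZ : Nat.card (center G) = 2) {m : G} (hm : orderOf m = 4) (hmZ : m ∉ center G) :
    Nat.card G = 8 := by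
  have hm2 := orderOf_sq_eq_two hm
  have mem_zpowers_of_sq {y : G} (hy : y ^ 2 = 1) : y ∈ zpowers m := by
    rcases eq_one_or_eq_of_sq_eq_one hinv hm2 hy with rfl | rfl
    exacts [one_mem _, pow_mem (mem_zpowers m) 2]
  have hcentralizer : centralizer {m} = zpowers m := by
    refine le_antisymm (fun y hy ↦ ?_) (zpowers_le.mpr (mem_centralizer_singleton_iff.mpr rfl))
    have hcomm : Commute y m := mem_centralizer_singleton_iff.mp hy
    have hy4 : (y ^ 2) ^ 2 = 1 := by
      have hpow := pow_card_eq_one'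
        (x := (⟨y ^ 2, sq_mem_center_of_commutator_le_center hclass hZ y⟩ : center G))
      rw [hZ] at hpow
      exact congrArg Subtype.val hpow
    rcases eq_one_or_eq_of_sq_eq_one hinv hm2 hy4 with h | h
    · exact mem_zpowers_of_sq h
    · refine (mul_mem_cancel_right (mem_zpowers m)).mp (mem_zpowers_of_sq ?_)
      rw [hcomm.mul_pow, h, ← pow_add]
      exact orderOf_dvd_iff_pow_eq_one.mp hm.dvd
  rw [← (centralizer {m}).card_mul_index, index_centralizer_singleton_eq_two hclass hZ hmZ,
    hcentralizer, Nat.card_zpowers, hm]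

include hG

/- Otherwise `H` contains some `t` of order `4`. Then `t ^ 2 = m ^ 2`, so `t⁻¹ * m` squares to `1`
and therefore lies in `H`. -/
theorem sq_eq_one_of_commute_orderOf_eq_four {H : Subgroup G} {m : G} (hm : orderOf m = 4)
    (hmH : m ∉ H) (hm2 : m ^ 2 ∈ H) (hcomm : ∀ h ∈ H, Commute h m) : ∀ h ∈ H, h ^ 2 = 1 := by
  intro h hh
  by_contra hne
  have hm2_order : orderOf (m ^ 2) = 2 := orderOf_sq_eq_two hm
  obtain ⟨k, hk⟩ := IsPGroup.iff_orderOf.mp hG h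
  have h4 : 4 ∣ orderOf h := by
    have hk2 : 2 ≤ k := by
      by_contra! hlt
      exact hne (orderOf_dvd_iff_pow_eq_one.mp (hk ▸ pow_dvd_pow 2 (Nat.le_of_lt_succ hlt)))
    exact hk ▸ pow_dvd_pow 2 hk2
  set t := h ^ (orderOf h / 4)
  have htH : t ∈ H := H.pow_mem hh _
  have ht_order : orderOf t = 4 := orderOf_pow_orderOf_div (hk ▸ by positivity) h4
  have ht2_order : orderOf (t ^ 2) = 2 := orderOf_sq_eq_two ht_order
  have htm : (t⁻¹ * m) ^ 2 = 1 := by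
    rw [(hcomm t htH).inv_left.mul_pow, inv_pow, hinv ht2_order hm2_order, inv_mul_cancel]
  rcases eq_one_or_eq_of_sq_eq_one hinv hm2_order htm with h1 | h1
  · exact hmH (inv_mul_eq_one.mp h1 ▸ htH)
  · exact hmH ((H.mul_mem_cancel_left (H.inv_mem htH)).mp (h1 ▸ hm2))

theorem card_center_eq_two_of_orderOf_eq_four {m : G} (hm : orderOf m = 4) (hmZ : m ∉ center G) :
    Nat.card (center G) = 2 := by
  have hm2 := orderOf_sq_eq_two hm
  have hm2Z := mem_center_of_orderOf_eq_two hinv hm2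
  exact card_eq_two_of_forall_sq_eq_one hinv hm2 hm2Z
    (sq_eq_one_of_commute_orderOf_eq_four hG hinv hm hmZ hm2Z
      fun h hh ↦ (mem_center_iff.mp hh m).symm)

end UniqueInvolution

section CoprimeUniqueInvolution

variable {A G : Type*} [Group A] [Group G] [MulDistribMulAction A G] {p : ℕ}

theorem smul_eq_self_of_sq_fixed (hA : IsPGroup p A) (hp : Odd p) {H : Subgroup G}
    [IsMulCommutative H] (hH : IsInvariantSubgroup A H)
    (hinv : {g : G | g ∈ H ∧ orderOf g = 2}.Subsingleton) {a : A} {b : G} (hb : b ∈ H)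
    (hsq : a • b ^ 2 = b ^ 2) : a • b = b := by
  set c := b⁻¹ * a • b with hc
  have hcH : c ∈ H := H.mul_mem (H.inv_mem hb) (hH a hb)
  have hc2 : c ^ 2 = 1 := by
    have hcomm : Commute b⁻¹ (a • b) := setLike_mul_comm (H.inv_mem hb) (hH a hb)
    rw [hc, hcomm.mul_pow, ← smul_pow', hsq, inv_pow, inv_mul_cancel]
  have hac : a • c = c := by
    by_cases hc1 : c = 1
    · rw [hc1, smul_one]
    · have hc_order : orderOf c = 2 := orderOf_eq_prime hc2 hc1
      have hac_order : orderOf (a • c) = 2 :=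
        (MulEquiv.orderOf_eq (MulDistribMulAction.toMulEquiv G a) c).trans hc_order
      exact hinv ⟨hH a hcH, hac_order⟩ ⟨hcH, hc_order⟩
  refine smul_eq_of_smul_inv_mul_smul_eq hA ?_ hac
  exact Nat.Coprime.coprime_dvd_left (orderOf_dvd_of_pow_eq_one hc2) hp.coprime_two_left

theorem le_fixedPoints_of_subsingleton_involutions (hG : IsPGroup 2 G) (hA : IsPGroup p A)
    (hp : Odd p) {H : Subgroup G} [IsMulCommutative H] (hH : IsInvariantSubgroup A H)
    (hinv : {g : G | g ∈ H ∧ orderOf g = 2}.Subsingleton) : H ≤ FixedPoints.subgroup A G := by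
  have fixed_of_pow (a : A) (k : ℕ) : ∀ b ∈ H, b ^ 2 ^ k = 1 → a • b = b := by
    induction k with
    | zero => simp +contextual
    | succ k ih =>
      intro b hb hbk
      refine smul_eq_self_of_sq_fixed hA hp hH hinv hb (ih _ (H.pow_mem hb 2) ?_)
      rwa [← pow_mul, ← pow_succ']
  intro b hb a
  obtain ⟨k, hk⟩ := hG b
  exact fixed_of_pow a k b hb hk

theorem actsTriviallyOnAbelian_of_subsingleton_involutions (hG : IsPGroup 2 G) (hA : IsPGroup p A)
    (hp : Odd p) (hinv : {g : G | orderOf g = 2}.Subsingleton) : ActsTriviallyOnAbelian A G :=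
  fun _ hB _ ↦ le_fixedPoints_of_subsingleton_involutions hG hA hp hB (hinv.anti fun _ hg ↦ hg.2)

theorem sq_inv_mul_eq_commutatorElement {x k : G} (h : k ^ 2 = x ^ 2) :
    (x⁻¹ * k) ^ 2 = ⁅x⁻¹, k⁆ := by
  have hxk : x⁻¹ * k = x * k⁻¹ := by
    rw [inv_mul_eq_iff_eq_mul, ← mul_assoc, ← sq, ← h, sq, mul_inv_cancel_right]
  rw [commutatorElement_def, inv_inv, sq, mul_assoc (x⁻¹ * k) x, ← hxk]

/- Take `m = x⁻¹ * a • x` for a nonfixed `x` whose square is fixed. Then `m ^ 2 = ⁅x⁻¹, a • x⁆`, and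
`m ^ 4 = ⁅x⁻¹ * x⁻¹, a • x⁆ = 1`. -/
theorem exists_orderOf_eq_four (hG : IsPGroup 2 G) (hA : IsPGroup p A) (hp : Odd p)
    (hinv : {g : G | orderOf g = 2}.Subsingleton) (hclass : commutator G ≤ center G)
    (hfix : FixedPoints.subgroup A G = center G) (hne : FixedPoints.subgroup A G ≠ ⊤) :
    ∃ m ∉ FixedPoints.subgroup A G, orderOf m = 4 := by
  obtain ⟨x, hx, hx2⟩ := exists_notMem_pow_mem hG hne
  obtain ⟨a, ha⟩ : ∃ a : A, a • x ≠ x := by simpa [FixedPoints.mem_subgroup] using hx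
  set m := x⁻¹ * a • x
  have hmfix : m ∉ FixedPoints.subgroup A G := fun h ↦
    ha (smul_eq_of_smul_inv_mul_smul_eq hA (hG.orderOf_coprime hp.coprime_two_left _) (h a))
  have hm_sq : m ^ 2 = ⁅x⁻¹, a • x⁆ :=
    sq_inv_mul_eq_commutatorElement ((smul_pow' a x 2).symm.trans (hx2 a))
  have hm_four : m ^ 2 ^ 2 = 1 := by
    have hx2_center : x⁻¹ * x⁻¹ ∈ center G := by
      rw [← mul_inv_rev, ← sq, ← hfix]
      exact inv_mem hx2
    rw [sq 2, pow_mul, hm_sq, sq, ← commutatorElement_mul_left_of_commutator_le_center hclass]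
    exact commutatorElement_eq_one_iff_mul_comm.mpr (mem_center_iff.mp hx2_center _).symm
  refine ⟨m, hmfix, orderOf_eq_prime_pow (p := 2) (n := 1) (fun h ↦ hmfix ?_) hm_four⟩
  rw [hfix]
  by_cases hm1 : m = 1
  · exact hm1 ▸ one_mem _
  · exact mem_center_of_orderOf_eq_two hinv (orderOf_eq_prime h hm1)

variable [Finite G] (hG : IsPGroup 2 G) (hA : IsPGroup p A) (hp : Odd p)
  (hinv : {g : G | orderOf g = 2}.Subsingleton) (hne : FixedPoints.subgroup A G ≠ ⊤)
include hG hA hp hinv hne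

theorem card_eq_eight_of_actionCommutator_eq_top (hGA : actionCommutator A G = ⊤) :
    Nat.card G = 8 ∧ ∃ m ∉ FixedPoints.subgroup A G, orderOf m = 4 := by
  have : Group.IsNilpotent G := hG.isNilpotent
  have htriv := actsTriviallyOnAbelian_of_subsingleton_involutions hG hA hp hinv
  have hclass := htriv.commutator_le_center hGA
  have hfix := htriv.fixedPoints_eq_center hGA hclass
  obtain ⟨m, hm, hm4⟩ := exists_orderOf_eq_four hG hA hp hinv hclass hfix hne
  have hmZ := hfix ▸ hm
  have hZ := card_center_eq_two_of_orderOf_eq_four hG hinv hm4 hmZ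
  exact ⟨card_eq_eight_of_orderOf_eq_four hinv hclass hZ hm4 hmZ, m, hm, hm4⟩

variable [Fact p.Prime]

/- Since `R = [G, A]` has order `8`, the proper subgroup `[R, G]` of `R` is abelian, hence fixed by
`A`. So `C_G(A)` centralizes `R` and has exponent two. It therefore lies in `R`. -/
theorem actionCommutator_eq_top_of_subsingleton_involutions : actionCommutator A G = ⊤ := by
  have : Group.IsNilpotent G := hG.isNilpotent
  have hcop : (Nat.card G).Coprime p := coprime_card_of_isPGroup hG hp.coprime_two_left
  have htriv := actsTriviallyOnAbelian_of_subsingleton_involutions hG hA hp hinv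
  let R := actionCommutator A G
  let := (isInvariantSubgroup_actionCommutator (A := A) (G := G)).mulDistribMulAction
  have hinvR : {r : R | orderOf r = 2}.Subsingleton := fun r hr s hs ↦
    Subtype.ext (hinv ((orderOf_coe r).trans hr) ((orderOf_coe s).trans hs))
  obtain ⟨hR8, ⟨m, hmR⟩, hmfix, hm4⟩ := card_eq_eight_of_actionCommutator_eq_top
    (hG.to_subgroup R) hA hp hinvR (fixedPoints_actionCommutator_ne_top hA hcop hne)
    (actionCommutator_actionCommutator hA hcop)
  rw [orderOf_mk] at hm4
  have hcommutator : ⁅R, (⊤ : Subgroup G)⁆ ≤ FixedPoints.subgroup A G := by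
    have hlt : ⁅R, (⊤ : Subgroup G)⁆ < R := commutator_top_lt_of_ne_bot fun h ↦ by
      rw [h, card_bot] at hR8
      omega
    exact htriv _ (isInvariantSubgroup_actionCommutator.commutator
      (isInvariantSubgroup_of_characteristic ⊤))
      (isMulCommutative_of_card_dvd_prime_pow_three (p := 2)
        ((card_dvd_of_le hlt.le).trans hR8.dvd)
        fun h ↦ hlt.ne (eq_of_le_of_card_ge hlt.le (hR8.trans h.symm).le))
  have hcentralizer := actionCommutator_le_centralizer_fixedPoints hA hcop hcommutator
  have hsq := sq_eq_one_of_commute_orderOf_eq_four hG hinv hm4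
    (fun h : m ∈ FixedPoints.subgroup A G ↦ hmfix fun a ↦ Subtype.ext (h a))
    (fun a ↦ map_eq_self_of_orderOf_eq_two hinv (MulDistribMulAction.toMulEquiv G a)
      (orderOf_sq_eq_two hm4))
    fun c hc ↦ mem_centralizer_iff.mp (hcentralizer hmR) c hc
  refine eq_top_iff.mpr fun g _ ↦ ?_
  obtain ⟨x, hx, r, hr, rfl⟩ := exists_eq_mul_actionCommutator hA hcop g
  refine R.mul_mem ?_ hr
  rcases eq_one_or_eq_of_sq_eq_one hinv (orderOf_sq_eq_two hm4) (hsq x hx) with rfl | rfl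
  exacts [R.one_mem, R.pow_mem hmR 2]

theorem card_eq_eight_of_subsingleton_involutions : Nat.card G = 8 :=
  (card_eq_eight_of_actionCommutator_eq_top hG hA hp hinv hne
    (actionCommutator_eq_top_of_subsingleton_involutions hG hA hp hinv hne)).1

theorem fixedPoints_eq_center_of_subsingleton_involutions :
    FixedPoints.subgroup A G = center G := by
  have : Group.IsNilpotent G := hG.isNilpotent
  have hGA := actionCommutator_eq_top_of_subsingleton_involutions hG hA hp hinv hne
  have htriv := actsTriviallyOnAbelian_of_subsingleton_involutions hG hA hp hinv
  exact htriv.fixedPoints_eq_center hGA (htriv.commutator_le_center hGA)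

theorem card_center_eq_two_of_subsingleton_involutions : Nat.card (center G) = 2 := by
  obtain ⟨-, m, hm, hm4⟩ := card_eq_eight_of_actionCommutator_eq_top hG hA hp hinv hne
    (actionCommutator_eq_top_of_subsingleton_involutions hG hA hp hinv hne)
  rw [fixedPoints_eq_center_of_subsingleton_involutions hG hA hp hinv hne] at hm
  exact card_center_eq_two_of_orderOf_eq_four hG hinv hm4 hm

theorem eq_three_of_subsingleton_involutions : p = 3 := by
  have hmod := hA.card_modEq_card_fixedPoints G
  have hcard : Nat.card (MulAction.fixedPoints A G) = 2 :=
    (congrArg (fun H : Subgroup G ↦ Nat.card H)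
      (fixedPoints_eq_center_of_subsingleton_involutions hG hA hp hinv hne)).trans
      (card_center_eq_two_of_subsingleton_involutions hG hA hp hinv hne)
  rw [card_eq_eight_of_subsingleton_involutions hG hA hp hinv hne, hcard] at hmod
  have hdvd : p ∣ 2 * 3 := (Nat.modEq_iff_dvd' (by norm_num)).mp hmod.symm
  exact (Nat.prime_dvd_prime_iff_eq Fact.out Nat.prime_three).mp
    (hp.coprime_two_right.dvd_of_dvd_mul_left hdvd)

end CoprimeUniqueInvolution

section SumOverProduct

open scoped Classical in
theorem sum_monoidHom_comp {A B R : Type*} [Group A] [Group B] [Fintype A] [CommRing R]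
    (φ : A →* B) [Fintype φ.range] (f : B → R) :
    ∑ a, f (φ a) = Nat.card φ.ker * ∑ b : φ.range, f b := by
  have hfiber (b : φ.range) : Fintype.card {a // φ.rangeRestrict a = b} = Nat.card φ.ker := by
    have hb : b ∈ Set.range φ.rangeRestrict := φ.rangeRestrict_surjective b
    rw [Fintype.card_subtype,
      MonoidHom.card_fiber_eq_of_mem_range φ.rangeRestrict hb ⟨1, map_one _⟩,
      ← Fintype.card_subtype, ← Nat.card_eq_fintype_card]
    exact Nat.card_congr (Equiv.subtypeEquivRight fun a ↦ by
      rw [MonoidHom.mem_ker, Subtype.ext_iff]; rfl)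
  calc ∑ a, f (φ a) = ∑ a, f (φ.rangeRestrict a) := rfl
    _ = ∑ b : φ.range, ∑ a : {a // φ.rangeRestrict a = b}, f (φ.rangeRestrict a) :=
      (Fintype.sum_fiberwise _ _).symm
    _ = ∑ b : φ.range, Nat.card φ.ker * f b := Finset.sum_congr rfl fun b _ ↦ by
      rw [Fintype.sum_congr _ (fun _ ↦ f b) fun a ↦ congrArg (fun x : φ.range ↦ f x) a.2,
        Finset.sum_const, Finset.card_univ, hfiber, nsmul_eq_mul]
    _ = _ := (Finset.mul_sum _ _ _).symm

theorem card_inf_mul_sum_sup {G R : Type*} [Group G] [CommRing R] {H K : Subgroup G} [Fintype H]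
    [Fintype K] [Fintype ↥(H ⊔ K)] (hHK : K ≤ centralizer (H : Set G)) {f : G → R}
    (hf : ∀ h ∈ H, ∀ k ∈ K, f (h * k) = f h * f k) :
    (Nat.card (H ⊓ K : Subgroup G) : R) * ∑ x : ↥(H ⊔ K), f x =
      (∑ h : H, f h) * ∑ k : K, f k := by
  classical
  let φ : H × K →* G := H.subtype.noncommCoprod K.subtype fun h k ↦
    mem_centralizer_iff.mp (hHK k.2) h h.2
  have hrange : φ.range = H ⊔ K := by
    rw [show φ.range = _ from MonoidHom.noncommCoprod_range .., range_subtype, range_subtype]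
  have hker : Nat.card φ.ker = Nat.card (H ⊓ K : Subgroup G) := Nat.card_congr
    { toFun x := ⟨x.1.1, x.1.1.2, (eq_inv_of_mul_eq_one_left x.2 : (x.1.1 : G) = (x.1.2 : G)⁻¹) ▸
        K.inv_mem x.1.2.2⟩
      invFun x := ⟨(⟨x, x.2.1⟩, ⟨(x : G)⁻¹, K.inv_mem x.2.2⟩), mul_inv_cancel (x : G)⟩
      left_inv x := Subtype.ext <| Prod.ext rfl <| Subtype.ext
        (eq_inv_of_mul_eq_one_right x.2).symm
      right_inv _ := rfl }
  have : Fintype φ.range := Fintype.ofFinite _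
  calc (Nat.card (H ⊓ K : Subgroup G) : R) * ∑ x : ↥(H ⊔ K), f x
      = Nat.card φ.ker * ∑ x : φ.range, f x := by
        rw [hker]
        congr 1
        exact (Fintype.sum_equiv (MulEquiv.subgroupCongr hrange).toEquiv _ _ fun _ ↦ rfl).symm
    _ = ∑ x, f (φ x) := (sum_monoidHom_comp φ f).symm
    _ = ∑ x : H × K, f x.1 * f x.2 := Fintype.sum_congr _ _ fun x ↦ hf _ x.1.2 _ x.2.2
    _ = (∑ h : H, f h) * ∑ k : K, f k := by
        rw [Fintype.sum_mul_sum, Fintype.sum_prod_type]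

end SumOverProduct

section ElementaryAbelian

variable {G : Type*} [Group G]

theorem le_centralizer_of_forall_sq_eq_one {A : Subgroup G} (hA : ∀ a ∈ A, a ^ 2 = 1) :
    A ≤ centralizer (A : Set G) := by
  refine fun a ha ↦ mem_centralizer_iff.mpr fun b hb ↦ ?_
  exact congrArg Subtype.val (Commute.of_orderOf_dvd_two
    (fun g : A ↦ orderOf_dvd_of_pow_eq_one (Subtype.ext (hA g g.2))) ⟨b, hb⟩ ⟨a, ha⟩).eq

theorem mem_of_maximal_forall_sq_eq_one {A : Subgroup G}
    (hA : Maximal (fun H : Subgroup G ↦ ∀ a ∈ H, a ^ 2 = 1) A) {c : G}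
    (hc : c ∈ centralizer (A : Set G)) (hc2 : c ^ 2 = 1) : c ∈ A := by
  have hcomm : ∀ x ∈ insert c (A : Set G), ∀ y ∈ insert c (A : Set G), x * y = y * x := by
    rw [Set.forall_mem_insert]
    refine ⟨Set.forall_mem_insert.mpr ⟨rfl, fun y hy ↦ (mem_centralizer_iff.mp hc y hy).symm⟩,
      fun x hx ↦ Set.forall_mem_insert.mpr ⟨mem_centralizer_iff.mp hc x hx, fun y hy ↦ ?_⟩⟩
    exact mem_centralizer_iff.mp (le_centralizer_of_forall_sq_eq_one hA.prop hy) x hx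
  have := isMulCommutative_closure hcomm
  refine hA.le_of_ge (y := closure (insert c (A : Set G))) (fun x hx ↦ ?_)
    ((Set.subset_insert c _).trans subset_closure) (subset_closure (Set.mem_insert c _))
  induction hx using closure_induction with
  | mem x hx =>
    have hsq : ∀ x ∈ insert c (A : Set G), x ^ 2 = 1 := Set.forall_mem_insert.mpr ⟨hc2, hA.prop⟩
    exact hsq x hx
  | one => exact one_pow 2
  | mul x y hx hy hx2 hy2 =>
    have hxy : Commute x y := setLike_mul_comm hx hy
    rw [hxy.mul_pow, hx2, hy2, one_mul]
  | inv x _ hx2 => rw [inv_pow, hx2, inv_one]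

end ElementaryAbelian

section CommutatorCharacter

open scoped Classical in
/-- The nontrivial `±1`-valued character of a group of order two. -/
noncomputable def cardTwoCharacter {Z : Type*} [Group Z] (hZ : Nat.card Z = 2) : Z →* ℤ where
  toFun z := if z = 1 then 1 else -1
  map_one' := if_pos rfl
  map_mul' x y := by
    by_cases hx : x = 1
    · simp only [hx, one_mul, if_true]
    by_cases hy : y = 1
    · simp only [hy, mul_one, if_true]
    have : Finite Z := Nat.finite_of_card_ne_zero (by omega)
    have hxy : x = y := ((Nat.card_eq_two_iff' 1).mp hZ).unique hx hy
    have hxy1 : x * y = 1 := by rw [hxy, ← sq, ← hZ, pow_card_eq_one']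
    simp only [hx, hy, hxy1, if_true, if_false, mul_neg, mul_one, neg_neg]

variable {G : Type*} [Group G] (hG : commutator G ≤ center G) (hZ : Nat.card (center G) = 2)

/-- The `±1`-valued character of `G` given by the commutator with `g`. -/
noncomputable def commutatorCharacter (g : G) : G →* ℤ :=
  (cardTwoCharacter hZ).comp (commutatorHom hG g)

open scoped Classical in
theorem commutatorCharacter_apply (g x : G) :
    commutatorCharacter hG hZ g x = if Commute x g then 1 else -1 := by
  simp only [commutatorCharacter, cardTwoCharacter, commutatorHom, MonoidHom.comp_apply,
    MonoidHom.coe_mk, OneHom.coe_mk, Subtype.ext_iff, coe_one, commutatorElement_eq_one_iff_commute]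

theorem commutatorCharacter_comm (x y : G) :
    commutatorCharacter hG hZ x y = commutatorCharacter hG hZ y x := by
  rw [commutatorCharacter_apply, commutatorCharacter_apply]
  classical exact if_congr Commute.symm_iff rfl rfl

theorem commutatorCharacter_eq_one_iff {g x : G} :
    commutatorCharacter hG hZ g x = 1 ↔ Commute x g := by
  simp only [commutatorCharacter_apply, ite_eq_left_iff, reduceCtorEq, imp_false, not_not]

open scoped Classical in
theorem sum_commutatorCharacter (H : Subgroup G) [Fintype H] (g : G) :
    ∑ h : H, commutatorCharacter hG hZ g h =
      if g ∈ centralizer (H : Set G) then (Nat.card H : ℤ) else 0 := by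
  have htrivial :
      (commutatorCharacter hG hZ g).comp H.subtype = 1 ↔ g ∈ centralizer (H : Set G) := by
    rw [MonoidHom.ext_iff, Subtype.forall, mem_centralizer_iff]
    exact forall₂_congr fun h _ ↦ commutatorCharacter_eq_one_iff hG hZ
  refine (sum_hom_units ((commutatorCharacter hG hZ g).comp H.subtype)).trans ?_
  rw [Nat.card_eq_fintype_card, Nat.cast_ite, Nat.cast_zero]
  exact if_congr htrivial rfl rfl

variable [Finite G]
include hG hZ

/- Double counting: both sides are the sum of the commutator characters over `H × K`. -/
theorem card_mul_card_inf_centralizer (H K : Subgroup G) :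
    Nat.card H * Nat.card (K ⊓ centralizer (H : Set G) : Subgroup G) =
      Nat.card K * Nat.card (H ⊓ centralizer (K : Set G) : Subgroup G) := by
  classical
  have := Fintype.ofFinite G
  have sum_sum (H K : Subgroup G) : ∑ k : K, ∑ h : H, commutatorCharacter hG hZ k h =
      Nat.card H * Nat.card (K ⊓ centralizer (H : Set G) : Subgroup G) := by
    simp_rw [sum_commutatorCharacter]
    rw [← Finset.sum_filter, Finset.sum_const, nsmul_eq_mul, mul_comm, ← Fintype.card_subtype,
      ← Nat.card_eq_fintype_card]
    congr 2
    exact Nat.card_congr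
      (Equiv.subtypeSubtypeEquivSubtypeInter (· ∈ K) (· ∈ centralizer (H : Set G)))
  have hsymm : ∑ k : K, ∑ h : H, commutatorCharacter hG hZ k h =
      ∑ h : H, ∑ k : K, commutatorCharacter hG hZ h k := by
    rw [Finset.sum_comm]
    exact Fintype.sum_congr _ _ fun h ↦ Fintype.sum_congr _ _ fun k ↦
      commutatorCharacter_comm hG hZ _ _
  rw [sum_sum, sum_sum] at hsymm
  exact_mod_cast hsymm

theorem card_mul_card_centralizer (H : Subgroup G) :
    Nat.card H * Nat.card (centralizer (H : Set G)) =
      Nat.card G * Nat.card (H ⊓ center G : Subgroup G) := by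
  simpa only [top_inf_eq, coe_top, centralizer_univ, card_top] using
    card_mul_card_inf_centralizer hG hZ H ⊤

end CommutatorCharacter

section SquareSign

variable {G : Type*} [Group G]

open scoped Classical in
/-- `squareSign g` is `1` or `-1` according to whether `g ^ 2 = 1`. If `G` is extraspecial, this is
the quadratic form `x ↦ x ^ 2` on `G ⧸ center G`, written multiplicatively. -/
noncomputable def squareSign (g : G) : ℤ := if g ^ 2 = 1 then 1 else -1

theorem squareSign_of_sq_eq_one {g : G} (hg : g ^ 2 = 1) : squareSign g = 1 := if_pos hg

theorem squareSign_of_sq_ne_one {g : G} (hg : g ^ 2 ≠ 1) : squareSign g = -1 := if_neg hg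

theorem sum_squareSign_of_sq_eq_one_iff {A H : Subgroup G} [Fintype H] (hAH : A ≤ H)
    (hA : ∀ x ∈ H, x ^ 2 = 1 ↔ x ∈ A) :
    ∑ x : H, squareSign (x : G) = 2 * Nat.card A - Nat.card H := by
  classical
  have hsign (x : H) : squareSign (x : G) = 2 * (if (x : G) ∈ A then 1 else 0) - 1 := by
    split_ifs with hx
    · exact squareSign_of_sq_eq_one ((hA x x.2).mpr hx)
    · exact squareSign_of_sq_ne_one (mt (hA x x.2).mp hx)
  have hcard : ({x : H | (x : G) ∈ A} : Finset H).card = Nat.card A := by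
    rw [← Fintype.card_subtype, ← Nat.card_eq_fintype_card]
    exact Nat.card_congr (subgroupOfEquivOfLe hAH).toEquiv
  simp_rw [hsign]
  rw [Finset.sum_sub_distrib, ← Finset.mul_sum, Finset.sum_boole, hcard, Finset.sum_const,
    Finset.card_univ, nsmul_one, Nat.card_eq_fintype_card (α := H)]

variable (hG : commutator G ≤ center G) (hZ : Nat.card (center G) = 2)
include hG hZ

theorem squareSign_eq_cardTwoCharacter (x : G) : squareSign x =
    cardTwoCharacter hZ ⟨x ^ 2, sq_mem_center_of_commutator_le_center hG hZ x⟩ := by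
  by_cases hx : x ^ 2 = 1
  · simp only [squareSign_of_sq_eq_one hx, hx]
    exact (map_one _).symm
  · rw [squareSign_of_sq_ne_one hx]
    exact (if_neg fun h ↦ hx (congrArg Subtype.val h)).symm

theorem squareSign_mul (x y : G) :
    squareSign (x * y) = commutatorCharacter hG hZ y x * squareSign x * squareSign y := by
  simp only [squareSign_eq_cardTwoCharacter hG hZ, commutatorCharacter, MonoidHom.comp_apply,
    ← map_mul]
  exact congrArg _ (Subtype.ext (mul_sq_of_commutator_le_center hG hZ x y))

theorem squareSign_mul_of_commute {x y : G} (hxy : Commute x y) :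
    squareSign (x * y) = squareSign x * squareSign y := by
  rw [squareSign_mul hG hZ, (commutatorCharacter_eq_one_iff hG hZ).mpr hxy, one_mul]

/- Averaging over the translations by `A` multiplies the sign of `g` by the mean over `A` of the
character `⁅·, g⁆`, which vanishes unless `g` centralizes `A`. -/
theorem sum_squareSign_eq_sum_centralizer [Fintype G] {A : Subgroup G} (hA : ∀ a ∈ A, a ^ 2 = 1)
    [Fintype (centralizer (A : Set G))] :
    ∑ g : G, squareSign g = ∑ g : centralizer (A : Set G), squareSign (g : G) := by
  classical
  have hpos : (Nat.card A : ℤ) ≠ 0 := Nat.cast_ne_zero.mpr Nat.card_pos.ne'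
  have translate (a : A) : ∑ g : G, squareSign (g * a) = ∑ g : G, squareSign g :=
    Equiv.sum_comp (Equiv.mulRight (a : G)) squareSign
  refine mul_left_cancel₀ hpos ?_
  calc (Nat.card A : ℤ) * ∑ g : G, squareSign g
      = ∑ a : A, ∑ g : G, squareSign (g * a) := by
        simp only [translate, Finset.sum_const, Finset.card_univ, nsmul_eq_mul,
          Nat.card_eq_fintype_card]
    _ = ∑ g : G, ∑ a : A, commutatorCharacter hG hZ g a * squareSign g := by
        rw [Finset.sum_comm]
        refine Fintype.sum_congr _ _ fun g ↦ Fintype.sum_congr _ _ fun a ↦ ?_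
        rw [squareSign_mul hG hZ, squareSign_of_sq_eq_one (hA a a.2), mul_one,
          commutatorCharacter_comm]
    _ = ∑ g with g ∈ centralizer (A : Set G), Nat.card A * squareSign g := by
        simp_rw [← Finset.sum_mul, sum_commutatorCharacter, ite_mul, zero_mul]
        rw [Finset.sum_filter]
    _ = Nat.card A * ∑ g : centralizer (A : Set G), squareSign (g : G) := by
        rw [Finset.mul_sum]
        exact Finset.sum_subtype _ (fun g ↦ by rw [Finset.mem_filter_univ]) _

variable [Fintype G] {n : ℕ} (hcard : Nat.card G = 2 ^ (2 * n + 1))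
include hcard

theorem sum_squareSign_pos_of_isPlusType (hplus : IsPlusType G n) : 0 < ∑ g : G, squareSign g := by
  classical
  obtain ⟨A, hAcard, hA⟩ := hplus
  have hcentralizer : Nat.card (centralizer (A : Set G)) ≤ Nat.card A := by
    refine Nat.le_of_mul_le_mul_left ?_ (Nat.card_pos (α := A))
    calc Nat.card A * Nat.card (centralizer (A : Set G))
        = Nat.card G * Nat.card (A ⊓ center G : Subgroup G) := card_mul_card_centralizer hG hZ A
      _ ≤ Nat.card G * 2 := Nat.mul_le_mul_left _ (hZ ▸ card_le_of_le inf_le_right)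
      _ = Nat.card A * Nat.card A := by rw [hcard, hAcard]; ring
  have hself : A = centralizer (A : Set G) :=
    eq_of_le_of_card_ge (le_centralizer_of_forall_sq_eq_one hA) hcentralizer
  rw [sum_squareSign_eq_sum_centralizer hG hZ hA]
  refine Finset.sum_pos (fun g _ ↦ ?_) Finset.univ_nonempty
  rw [squareSign_of_sq_eq_one (hA g (hself.ge g.2))]
  exact one_pos

theorem isPlusType_of_sum_squareSign_pos (hpos : 0 < ∑ g : G, squareSign g) : IsPlusType G n := by
  classical
  obtain ⟨A, hA⟩ := (Set.toFinite {A : Subgroup G | ∀ a ∈ A, a ^ 2 = 1}).exists_maximal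
    ⟨⊥, fun a ha ↦ by rw [mem_bot.mp ha, one_pow]⟩
  have hle := le_centralizer_of_forall_sq_eq_one hA.prop
  have hlt : Nat.card (centralizer (A : Set G)) < 2 * Nat.card A := by
    rw [sum_squareSign_eq_sum_centralizer hG hZ hA.prop,
      sum_squareSign_of_sq_eq_one_iff hle fun c hc ↦
        ⟨mem_of_maximal_forall_sq_eq_one hA hc, hA.prop c⟩] at hpos
    exact_mod_cast sub_pos.mp hpos
  have hself : A = centralizer (A : Set G) := eq_of_le_of_card_ge hle
    (Nat.eq_of_dvd_of_lt_two_mul Nat.card_pos.ne' (card_dvd_of_le hle) hlt).le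
  refine ⟨A, Nat.pow_left_injective two_ne_zero ?_, hA.prop⟩
  have hdual := card_mul_card_centralizer hG hZ A
  rw [← hself, inf_eq_right.mpr (hself ▸ center_le_centralizer _), hZ, hcard] at hdual
  calc Nat.card A ^ 2 = 2 ^ (2 * n + 1) * 2 := (sq _).trans hdual
    _ = (2 ^ (n + 1)) ^ 2 := by ring

theorem isPlusType_iff_sum_squareSign_pos : IsPlusType G n ↔ 0 < ∑ g : G, squareSign g :=
  ⟨sum_squareSign_pos_of_isPlusType hG hZ hcard, isPlusType_of_sum_squareSign_pos hG hZ hcard⟩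

end SquareSign

section UniqueInvolutionAction

/-- The hypotheses of the theorem, for an action instead of a group of automorphisms: a noncyclic
`p`-group `A`, `p` odd, acts on a `2`-group `W`, and every nontrivial element of `A` fixes at most
one involution. -/
structure UniqueInvolutionAction (p : ℕ) (A W : Type*) [Group A] [Group W]
    [MulDistribMulAction A W] : Prop where
  isPGroup_two : IsPGroup 2 W
  isPGroup : IsPGroup p A
  odd : Odd p
  not_isCyclic : ¬ IsCyclic A
  subsingleton_involutions (a : A) : a ≠ 1 → {w : W | a • w = w ∧ orderOf w = 2}.Subsingleton

/-- The components of the action: the subgroups `C_W(a)`, `a ≠ 1`, on which `A` acts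
nontrivially. -/
def IsComponent (A : Type*) {W : Type*} [Group A] [Group W] [MulDistribMulAction A W]
    (R : Subgroup W) : Prop :=
  (∃ a : A, a ≠ 1 ∧ fixedBySubgroup W a = R) ∧ ¬ R ≤ FixedPoints.subgroup A W

variable {A W : Type*} [CommGroup A] [Group W] [MulDistribMulAction A W] {p : ℕ}

theorem UniqueInvolutionAction.actsTriviallyOnAbelian [Finite A] [Finite W] [Fact p.Prime]
    (h : UniqueInvolutionAction p A W) : ActsTriviallyOnAbelian A W := by
  intro B hB hBcomm
  let := hB.mulDistribMulAction
  suffices FixedPoints.subgroup A B = ⊤ from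
    fun b hb a ↦ congrArg Subtype.val (this.ge (mem_top ⟨b, hb⟩) a)
  have hB2 : IsPGroup 2 B := h.isPGroup_two.to_subgroup B
  have : Group.IsNilpotent B := hB2.isNilpotent
  refine eq_top_of_fixedBySubgroup_le h.isPGroup h.not_isCyclic
    (coprime_card_of_isPGroup hB2 h.odd.coprime_two_left) fun a ha b hb c ↦ ?_
  have hcomm : IsMulCommutative (B ⊓ fixedBySubgroup W a : Subgroup W) :=
    isMulCommutative_iff_of_setLike.mpr fun _ hx _ hy ↦ setLike_mul_comm hx.1 hy.1
  exact Subtype.ext (le_fixedPoints_of_subsingleton_involutions h.isPGroup_two h.isPGroup h.odd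
    (hB.inf (isInvariantSubgroup_fixedBySubgroup a))
    ((h.subsingleton_involutions a ha).anti fun _ hw ↦ ⟨hw.1.2, hw.2⟩)
    ⟨b.2, congrArg Subtype.val hb⟩ c)

namespace IsComponent

variable {R S : Subgroup W} (hR : IsComponent A R)
include hR

theorem isInvariantSubgroup : IsInvariantSubgroup A R := by
  obtain ⟨⟨a, -, rfl⟩, -⟩ := hR
  exact isInvariantSubgroup_fixedBySubgroup a

theorem fixedPoints_le : FixedPoints.subgroup A W ≤ R := by
  obtain ⟨⟨a, -, rfl⟩, -⟩ := hR
  exact fixedPoints_le_fixedBySubgroup a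

theorem fixedPoints_eq_subgroupOf :
    letI := hR.isInvariantSubgroup.mulDistribMulAction
    FixedPoints.subgroup A R = (FixedPoints.subgroup A W).subgroupOf R := by
  ext r
  exact forall_congr' fun a ↦ Subtype.ext_iff

theorem fixedPoints_ne_top :
    letI := hR.isInvariantSubgroup.mulDistribMulAction
    FixedPoints.subgroup A R ≠ ⊤ := by
  rw [hR.fixedPoints_eq_subgroupOf]
  exact fun h ↦ hR.2 (subgroupOf_eq_top.mp h)

variable (h : UniqueInvolutionAction p A W)
include h

theorem subsingleton_involutions : {r : R | orderOf r = 2}.Subsingleton := by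
  obtain ⟨⟨a, ha, rfl⟩, -⟩ := hR
  exact fun r hr s hs ↦ Subtype.ext (h.subsingleton_involutions a ha
    ⟨r.2, (orderOf_coe r).trans hr⟩ ⟨s.2, (orderOf_coe s).trans hs⟩)

variable [Finite W] [Fact p.Prime]

theorem eq_three : p = 3 := by
  let := hR.isInvariantSubgroup.mulDistribMulAction
  exact eq_three_of_subsingleton_involutions (h.isPGroup_two.to_subgroup R) h.isPGroup h.odd
    (hR.subsingleton_involutions h) hR.fixedPoints_ne_top

theorem card_eq_eight : Nat.card R = 8 := by
  let := hR.isInvariantSubgroup.mulDistribMulAction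
  exact card_eq_eight_of_subsingleton_involutions (h.isPGroup_two.to_subgroup R) h.isPGroup h.odd
    (hR.subsingleton_involutions h) hR.fixedPoints_ne_top

theorem center_eq_subgroupOf : center R = (FixedPoints.subgroup A W).subgroupOf R := by
  let := hR.isInvariantSubgroup.mulDistribMulAction
  rw [← hR.fixedPoints_eq_subgroupOf]
  exact (fixedPoints_eq_center_of_subsingleton_involutions (h.isPGroup_two.to_subgroup R)
    h.isPGroup h.odd (hR.subsingleton_involutions h) hR.fixedPoints_ne_top).symm

theorem card_fixedPoints_eq_two : Nat.card (FixedPoints.subgroup A W) = 2 := by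
  let := hR.isInvariantSubgroup.mulDistribMulAction
  rw [← Nat.card_congr (subgroupOfEquivOfLe hR.fixedPoints_le).toEquiv,
    ← hR.center_eq_subgroupOf h]
  exact card_center_eq_two_of_subsingleton_involutions (h.isPGroup_two.to_subgroup R)
    h.isPGroup h.odd (hR.subsingleton_involutions h) hR.fixedPoints_ne_top

theorem le_actionCommutator : R ≤ actionCommutator A W := by
  let := hR.isInvariantSubgroup.mulDistribMulAction
  have htop : actionCommutator A R = ⊤ :=
    actionCommutator_eq_top_of_subsingleton_involutions (h.isPGroup_two.to_subgroup R)
      h.isPGroup h.odd (hR.subsingleton_involutions h) hR.fixedPoints_ne_top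
  rw [← subgroupOf_eq_top, ← top_le_iff, ← htop]
  exact actionCommutator_le.mpr fun a r ↦ inv_mul_smul_mem_actionCommutator a r.1

theorem sq_eq_one_iff {r : W} (hr : r ∈ R) : r ^ 2 = 1 ↔ r ∈ FixedPoints.subgroup A W := by
  constructor
  · intro hr2
    by_cases hr1 : r = 1
    · exact hr1 ▸ one_mem _
    have hmem : (⟨r, hr⟩ : R) ∈ center R :=
      mem_center_of_orderOf_eq_two (hR.subsingleton_involutions h)
        ((orderOf_mk r hr).trans (orderOf_eq_prime hr2 hr1))
    rwa [hR.center_eq_subgroupOf h] at hmem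
  · intro hfix
    have hpow := pow_card_eq_one' (x := (⟨r, hfix⟩ : FixedPoints.subgroup A W))
    rw [hR.card_fixedPoints_eq_two h] at hpow
    exact congrArg Subtype.val hpow

theorem sum_squareSign [Fintype R] : ∑ r : R, squareSign (r : W) = -4 := by
  rw [sum_squareSign_of_sq_eq_one_iff hR.fixedPoints_le fun r hr ↦ hR.sq_eq_one_iff h hr,
    hR.card_fixedPoints_eq_two h, hR.card_eq_eight h]
  rfl

theorem eq_of_le (hS : IsComponent A S) (hRS : R ≤ S) : R = S :=
  eq_of_le_of_card_ge hRS ((hS.card_eq_eight h).trans (hR.card_eq_eight h).symm).le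

variable [Finite A]

theorem le_of_mem (hS : IsInvariantSubgroup A S) {x : W} (hxR : x ∈ R) (hxS : x ∈ S)
    (hx : x ∉ FixedPoints.subgroup A W) : R ≤ S := by
  have hcard : Nat.card (R ⊓ S : Subgroup W) = 8 := by
    by_contra hne
    exact hx (h.actsTriviallyOnAbelian _ (hR.isInvariantSubgroup.inf hS)
      (isMulCommutative_of_card_dvd_prime_pow_three (p := 2)
        ((card_dvd_of_le inf_le_left).trans (hR.card_eq_eight h).dvd) hne) ⟨hxR, hxS⟩)
  exact inf_eq_left.mp (eq_of_le_of_card_ge inf_le_left ((hR.card_eq_eight h).trans hcard.symm).le)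

theorem fixedBySubgroup_eq_of_mem {a : A} (ha : a ≠ 1) {x : W} (hxR : x ∈ R) (hxa : a • x = x)
    (hx : x ∉ FixedPoints.subgroup A W) : fixedBySubgroup W a = R := by
  have hS : IsComponent A (fixedBySubgroup W a) := ⟨⟨a, ha, rfl⟩, fun hle ↦ hx (hle hxa)⟩
  exact (hR.eq_of_le h hS
    (hR.le_of_mem h (isInvariantSubgroup_fixedBySubgroup a) hxR hxa hx)).symm

end IsComponent

namespace UniqueInvolutionAction

variable (h : UniqueInvolutionAction p A W)
include h

theorem fixedPoints_ne_top [FaithfulSMul A W] : FixedPoints.subgroup A W ≠ ⊤ := by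
  have : Nontrivial A := not_subsingleton_iff_nontrivial.mp fun _ ↦ h.not_isCyclic inferInstance
  obtain ⟨a, ha⟩ := exists_ne (1 : A)
  exact fun htop ↦ fixedBySubgroup_ne_top ha
    (top_le_iff.mp (htop.ge.trans (fixedPoints_le_fixedBySubgroup a)))

variable [Finite A] [Finite W] [Fact p.Prime]

theorem eq_top_of_component_le {X : Subgroup W} (hfix : FixedPoints.subgroup A W ≤ X)
    (hX : ∀ R, IsComponent A R → R ≤ X) : X = ⊤ := by
  have : Group.IsNilpotent W := h.isPGroup_two.isNilpotent
  refine eq_top_of_fixedBySubgroup_le h.isPGroup h.not_isCyclic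
    (coprime_card_of_isPGroup h.isPGroup_two h.odd.coprime_two_left) fun a ha ↦ ?_
  by_cases hle : fixedBySubgroup W a ≤ FixedPoints.subgroup A W
  · exact hle.trans hfix
  · exact hX _ ⟨⟨a, ha, rfl⟩, hle⟩

variable [FaithfulSMul A W]

theorem exists_isComponent : ∃ R : Subgroup W, IsComponent A R := by
  by_contra! hnone
  exact h.fixedPoints_ne_top (h.eq_top_of_component_le le_rfl fun R hR ↦ (hnone R hR).elim)

theorem eq_three : p = 3 := by
  obtain ⟨R, hR⟩ := h.exists_isComponent
  exact hR.eq_three h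

theorem actionCommutator_eq_top : actionCommutator A W = ⊤ := by
  obtain ⟨R, hR⟩ := h.exists_isComponent
  exact h.eq_top_of_component_le (hR.fixedPoints_le.trans (hR.le_actionCommutator h))
    fun S hS ↦ hS.le_actionCommutator h

theorem commutator_le_center : commutator W ≤ center W :=
  have : Group.IsNilpotent W := h.isPGroup_two.isNilpotent
  h.actsTriviallyOnAbelian.commutator_le_center h.actionCommutator_eq_top

theorem fixedPoints_eq_center : FixedPoints.subgroup A W = center W :=
  h.actsTriviallyOnAbelian.fixedPoints_eq_center h.actionCommutator_eq_top h.commutator_le_center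

theorem card_center_eq_two : Nat.card (center W) = 2 := by
  obtain ⟨R, hR⟩ := h.exists_isComponent
  exact h.fixedPoints_eq_center ▸ hR.card_fixedPoints_eq_two h

theorem isExtraspecial : IsExtraspecial W := by
  have : Group.IsNilpotent W := h.isPGroup_two.isNilpotent
  refine isExtraspecial_of_commutator_le_center h.commutator_le_center h.card_center_eq_two
    fun hbot ↦ h.fixedPoints_ne_top (h.fixedPoints_eq_center.trans (top_le_iff.mp ?_))
  exact commutator_top_right_eq_bot_iff_le_center.mp hbot

theorem le_centralizer_of_isComponent {R S : Subgroup W} (hR : IsComponent A R)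
    (hS : IsComponent A S) (hRS : R ≠ S) : S ≤ centralizer (R : Set W) := by
  obtain ⟨a, _, rfl⟩ := hR.1
  obtain ⟨s, hs, hsa⟩ := SetLike.not_le_iff_exists.mp fun hle ↦ hRS (hS.eq_of_le h hR hle).symm
  refine hS.le_of_mem h (isInvariantSubgroup_fixedBySubgroup a).centralizer
    (S.mul_mem (S.inv_mem hs) (hS.isInvariantSubgroup a hs)) ?_ fun hfixed ↦ hsa ?_
  · refine mem_centralizer_iff.mpr fun r hr ↦ commute_inv_mul_smul hr ?_
    have hmem : ⁅r, s⁆ ∈ FixedPoints.subgroup A W := h.fixedPoints_eq_center ▸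
      h.commutator_le_center (commutator_mem_commutator (mem_top r) (mem_top s))
    exact hmem a
  · exact smul_eq_of_smul_inv_mul_smul_eq h.isPGroup
      (h.isPGroup_two.orderOf_coprime h.odd.coprime_two_left _) (hfixed a)

theorem exists_isComponent_ne :
    ∃ R S : Subgroup W, IsComponent A R ∧ IsComponent A S ∧ R ≠ S := by
  obtain ⟨R, hR⟩ := h.exists_isComponent
  obtain ⟨a, ha, haR⟩ := hR.1
  by_contra! hall
  refine fixedBySubgroup_ne_top ha (haR.trans ?_)
  exact h.eq_top_of_component_le hR.fixedPoints_le fun S hS ↦ (hall R S hR hS).ge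

theorem card_eq_nine : Nat.card A = 9 := by
  obtain ⟨R, S, hR, hS, hRS⟩ := h.exists_isComponent_ne
  obtain ⟨x, hxR, hx⟩ := SetLike.not_le_iff_exists.mp hR.2
  obtain ⟨y, hyS, hy⟩ := SetLike.not_le_iff_exists.mp hS.2
  obtain rfl := h.eq_three
  have hinf : MulAction.stabilizer A x ⊓ MulAction.stabilizer A y = ⊥ := by
    refine (eq_bot_iff_forall _).mpr fun a ⟨hax, hay⟩ ↦ ?_
    by_contra ha
    exact hRS ((hR.fixedBySubgroup_eq_of_mem h ha hxR hax hx).symm.trans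
      (hS.fixedBySubgroup_eq_of_mem h ha hyS hay hy))
  have index_le {T : Subgroup W} (hT : IsComponent A T) {z : W} (hz : z ∈ T) :
      (MulAction.stabilizer A z).index ≤ 3 :=
    hT.isInvariantSubgroup.index_stabilizer_le_of_card_lt_sq h.isPGroup
      (hT.card_eq_eight h ▸ by norm_num) hz
  have hle : Nat.card A ≤ 9 := calc
    Nat.card A = (MulAction.stabilizer A x ⊓ MulAction.stabilizer A y).index := by
      rw [hinf, index_bot]
    _ ≤ (MulAction.stabilizer A x).index * (MulAction.stabilizer A y).index := index_inf_le
    _ ≤ 3 * 3 := Nat.mul_le_mul (index_le hR hxR) (index_le hS hyS)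
  by_contra hne
  exact h.not_isCyclic (isCyclic_of_card_lt_sq h.isPGroup (by omega))

theorem card_le_four_of_forall_isComponent {F : Finset (Subgroup W)}
    (hF : ∀ R ∈ F, IsComponent A R) : F.card ≤ 4 := by
  classical
  have := Fintype.ofFinite A
  let S : Finset A := {a ∈ Finset.univ.erase 1 | fixedBySubgroup W a ∈ F}
  have two_le (R) (hR : R ∈ F) : 2 ≤ ({a ∈ S | fixedBySubgroup W a = R} : Finset A).card := by
    obtain ⟨⟨a, ha, rfl⟩, -⟩ := hF R hR
    have hinv : fixedBySubgroup W a⁻¹ = fixedBySubgroup W a := by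
      ext w
      exact inv_smul_eq_iff.trans eq_comm
    refine Finset.one_lt_card.mpr ⟨a, by simp [S, ha, hR], a⁻¹, by simp [S, ha, hinv, hR],
      fun h_eq ↦ ha ?_⟩
    have ha2 : a ^ 2 = 1 := (sq a).trans (mul_eq_one_iff_eq_inv.mpr h_eq)
    exact orderOf_eq_one_iff.mp
      ((h.isPGroup.orderOf_coprime h.odd.coprime_two_right a).eq_one_of_dvd
        (orderOf_dvd_of_pow_eq_one ha2))
  have hcard : 2 * F.card ≤ Nat.card A - 1 := calc
    2 * F.card ≤ S.card := Finset.mul_card_image_le_card_of_maps_to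
      (fun a ha ↦ (Finset.mem_filter.mp ha).2) 2 two_le
    _ ≤ (Finset.univ.erase (1 : A)).card := Finset.card_filter_le _ _
    _ = Nat.card A - 1 := by
      rw [Finset.card_erase_of_mem (Finset.mem_univ 1), Finset.card_univ, Nat.card_eq_fintype_card]
  rw [h.card_eq_nine] at hcard
  omega

section CentralProduct

variable {F : Finset (Subgroup W)} (hF : ∀ S ∈ F, IsComponent A S) {R : Subgroup W}
  (hR : IsComponent A R) (hRF : R ∉ F)
include hF hR hRF

theorem le_centralizer_center_sup :
    R ≤ centralizer ((center W ⊔ F.sup id : Subgroup W) : Set W) := by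
  rw [le_centralizer_iff]
  refine sup_le (center_le_centralizer _) (Finset.sup_le fun S hS ↦ ?_)
  exact h.le_centralizer_of_isComponent hR (hF S hS) fun hRS ↦ hRF (hRS ▸ hS)

theorem center_sup_inf_eq_center : (center W ⊔ F.sup id) ⊓ R = center W := by
  refine le_antisymm (fun x ⟨hxF, hxR⟩ ↦ ?_)
    (le_inf le_sup_left (h.fixedPoints_eq_center.ge.trans hR.fixedPoints_le))
  have hmem : (⟨x, hxR⟩ : R) ∈ center R := mem_center_iff.mpr fun r ↦ Subtype.ext
    (mem_centralizer_iff.mp (h.le_centralizer_center_sup hF hR hRF r.2) x hxF).symm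
  rw [hR.center_eq_subgroupOf h] at hmem
  exact h.fixedPoints_eq_center.le hmem

end CentralProduct

end UniqueInvolutionAction

end UniqueInvolutionAction

section CentralProductOfComponents

namespace UniqueInvolutionAction

variable {A W : Type*} [CommGroup A] [Finite A] [Group W] [MulDistribMulAction A W]
  [FaithfulSMul A W] {p : ℕ} [Fact p.Prime] (h : UniqueInvolutionAction p A W)
include h

open scoped Classical in
theorem sum_center_sup [Fintype W] {f : W → ℤ} {c : ℤ}
    (hf : ∀ {x y}, Commute x y → f (x * y) = f x * f y) (hcenter : ∀ z ∈ center W, f z = 1)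
    (hcomponent : ∀ R : Subgroup W, IsComponent A R → ∑ r : R, f r = 2 * c)
    {F : Finset (Subgroup W)} (hF : ∀ R ∈ F, IsComponent A R) :
    ∑ x : (center W ⊔ F.sup id : Subgroup W), f x = 2 * c ^ F.card := by
  induction F using Finset.induction with
  | empty =>
    have hempty : center W ⊔ (∅ : Finset (Subgroup W)).sup id = center W := by
      rw [Finset.sup_empty, sup_bot_eq]
    rw [Fintype.sum_congr _ (fun _ ↦ 1) fun x ↦ hcenter _ (hempty.le x.2), Finset.sum_const,
      Finset.card_univ, ← Nat.card_eq_fintype_card, hempty, h.card_center_eq_two,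
      Finset.card_empty, pow_zero]
    rfl
  | insert R F hRF ih =>
    have hF' (S) (hS : S ∈ F) : IsComponent A S := hF S (Finset.mem_insert_of_mem hS)
    have hR : IsComponent A R := hF R (Finset.mem_insert_self R F)
    have hle := h.le_centralizer_center_sup hF' hR hRF
    have hsum := card_inf_mul_sum_sup hle (f := f) fun x hx r hr ↦
      hf (mem_centralizer_iff.mp (hle hr) x hx)
    rw [h.center_sup_inf_eq_center hF' hR hRF, h.card_center_eq_two, ih hF', hcomponent R hR,
      Nat.cast_ofNat] at hsum
    have hsup : center W ⊔ (insert R F).sup id = (center W ⊔ F.sup id) ⊔ R := by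
      rw [Finset.sup_insert, id, sup_assoc, sup_comm R]
    rw [hsup, Finset.card_insert_of_notMem hRF]
    exact mul_left_cancel₀ two_ne_zero (hsum.trans (by ring))

theorem exists_card_eq_and_sum_squareSign_eq [Fintype W] : ∃ m, 2 ≤ m ∧ m ≤ 4 ∧
    Nat.card W = 2 * 4 ^ m ∧ ∑ w : W, squareSign w = 2 * (-2) ^ m := by
  classical
  let F : Finset (Subgroup W) := {R | IsComponent A R}
  have mem_F {R} : R ∈ F ↔ IsComponent A R := Finset.mem_filter_univ R
  have hF (R) (hR : R ∈ F) : IsComponent A R := mem_F.mp hR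
  have htop : center W ⊔ F.sup id = ⊤ :=
    h.eq_top_of_component_le (h.fixedPoints_eq_center.le.trans le_sup_left)
      fun R hR ↦ le_sup_of_le_right (Finset.le_sup (f := id) (mem_F.mpr hR))
  have sum_top (f : W → ℤ) : ∑ x : (center W ⊔ F.sup id : Subgroup W), f x = ∑ w, f w :=
    Fintype.sum_equiv ((MulEquiv.subgroupCongr htop).trans topEquiv).toEquiv _ _ fun _ ↦ rfl
  obtain ⟨R, S, hR, hS, hRS⟩ := h.exists_isComponent_ne
  refine ⟨F.card, Finset.one_lt_card.mpr ⟨R, mem_F.mpr hR, S, mem_F.mpr hS, hRS⟩,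
    h.card_le_four_of_forall_isComponent hF, ?_, ?_⟩
  · have hone : ∑ _ : W, (1 : ℤ) = 2 * 4 ^ F.card := (sum_top fun _ ↦ 1).symm.trans
      (h.sum_center_sup (f := fun _ ↦ 1) (fun _ ↦ rfl) (fun _ _ ↦ rfl)
        (fun T hT ↦ by simp [← Nat.card_eq_fintype_card, hT.card_eq_eight h]) hF)
    rw [Finset.sum_const, Finset.card_univ, nsmul_one] at hone
    rw [Nat.card_eq_fintype_card]
    exact_mod_cast hone
  · have hcenter (z) (hz : z ∈ center W) : squareSign z = 1 :=
      have hzfix : z ∈ FixedPoints.subgroup A W := h.fixedPoints_eq_center.ge hz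
      squareSign_of_sq_eq_one ((hR.sq_eq_one_iff h (hR.fixedPoints_le hzfix)).mpr hzfix)
    rw [← sum_top]
    exact h.sum_center_sup
      (squareSign_mul_of_commute h.commutator_le_center h.card_center_eq_two) hcenter
      (fun T hT ↦ hT.sum_squareSign h) hF

theorem card_and_isPlusType [Finite W] : (Nat.card W = 2 ^ 5 ∧ IsPlusType W 2) ∨
    (Nat.card W = 2 ^ 7 ∧ ¬ IsPlusType W 3) ∨ (Nat.card W = 2 ^ 9 ∧ IsPlusType W 4) := by
  have := Fintype.ofFinite W
  obtain ⟨m, hm, hm4, hcard, hsum⟩ := h.exists_card_eq_and_sum_squareSign_eq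
  have hcard_pow : Nat.card W = 2 ^ (2 * m + 1) := by
    rw [hcard, pow_succ', pow_mul]
    rfl
  have hplus : IsPlusType W m ↔ (0 : ℤ) < 2 * (-2) ^ m := by
    rw [isPlusType_iff_sum_squareSign_pos h.commutator_le_center h.card_center_eq_two hcard_pow,
      hsum]
  interval_cases m
  · exact .inl ⟨hcard_pow, hplus.mpr (by norm_num)⟩
  · exact .inr (.inl ⟨hcard_pow, fun hP ↦ absurd (hplus.mp hP) (by norm_num)⟩)
  · exact .inr (.inr ⟨hcard_pow, hplus.mpr (by norm_num)⟩)

end UniqueInvolutionAction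

end CentralProductOfComponents

theorem extraspecial_of_automorphisms {W : Type*} [Group W] [Finite W]
    (hW : IsPGroup 2 W) (p : ℕ) (hp : p.Prime) (hodd : Odd p)
    (E : Subgroup (MulAut W)) (hE : IsPGroup p ↥E)
    (hEab : ∀ a ∈ E, ∀ b ∈ E, a * b = b * a) (hEnc : ¬ IsCyclic ↥E)
    (hfix : ∀ e ∈ E, e ≠ 1 → {w : W | e w = w ∧ orderOf w = 2}.Subsingleton) :
    p = 3 ∧ Nat.card E = 9 ∧ IsExtraspecial W ∧
      ((Nat.card W = 2 ^ 5 ∧ IsPlusType W 2) ∨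
       (Nat.card W = 2 ^ 7 ∧ ¬ IsPlusType W 3) ∨
       (Nat.card W = 2 ^ 9 ∧ IsPlusType W 4)) ∧
      fixedSubgroup E = Subgroup.center W := by
  have : Fact p.Prime := ⟨hp⟩
  let _ : CommGroup E :=
    { (inferInstance : Group E) with mul_comm a b := Subtype.ext (hEab a a.2 b b.2) }
  have h : UniqueInvolutionAction p E W :=
    { isPGroup_two := hW
      isPGroup := hE
      odd := hodd
      not_isCyclic := hEnc
      subsingleton_involutions a ha := hfix a a.2 fun h ↦ ha (Subtype.ext h) }
  have hfixed : fixedSubgroup E = FixedPoints.subgroup E W := Subgroup.ext fun _ ↦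
    ⟨fun hw e ↦ hw e e.2, fun hw e he ↦ hw ⟨e, he⟩⟩
  exact ⟨h.eq_three, h.card_eq_nine, h.isExtraspecial, h.card_and_isPlusType,
    hfixed.trans h.fixedPoints_eq_center⟩
end
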